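/- arXiv:1703.04675 — 3 statements merged into one kernel-verified Lean document; each statement's English description precedes it below -/
import Mathlib

section
/- Every 1-quasiopen set U ⊂ X is μ-measurable. -/
open MeasureTheory Filter Metric Set
open scoped Topology ENNReal NNReal symmDiff

noncomputable section

namespace PaperBV

/-- A rectifiable curve parametrized by arc-length: a `1`-Lipschitz map on `[0, len]`. -/
structure Curve (X : Type*) [MetricSpace X] where
  len : ℝ
  len_nonneg : 0 ≤ len
  toFun : ℝ → X
  lip : LipschitzOnWith 1 toFun (Set.Icc 0 len)

variable {X : Type*} [MetricSpace X] [MeasurableSpace X] [BorelSpace X]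

/-- The curve lies in the set `A`. -/
def Curve.In (γ : Curve X) (A : Set X) : Prop :=
  ∀ t ∈ Set.Icc (0 : ℝ) γ.len, γ.toFun t ∈ A

/-- The curve integral `∫_γ g ds` of a nonnegative function, for an
arc-length parametrized curve. -/
def Curve.integral (γ : Curve X) (g : X → ℝ≥0∞) : ℝ≥0∞ :=
  ∫⁻ t in Set.Icc (0 : ℝ) γ.len, g (γ.toFun t)

/-- The upper gradient inequality `|u(x) - u(y)| ≤ ∫_γ g ds` along the curve `γ`,
where `x, y` are the endpoints of `γ`. -/
def UGIneq (u : X → ℝ) (g : X → ℝ≥0∞) (γ : Curve X) : Prop :=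
  ENNReal.ofReal |u (γ.toFun 0) - u (γ.toFun γ.len)| ≤ γ.integral g

/-- `g` is an upper gradient of `u` on `X`: `g` is nonnegative (automatic in `ℝ≥0∞`),
Borel, and the upper gradient inequality holds along every curve. -/
def IsUpperGradient (u : X → ℝ) (g : X → ℝ≥0∞) : Prop :=
  Measurable g ∧ ∀ γ : Curve X, UGIneq u g γ

/-- A family of curves has zero `1`-modulus: there is a nonnegative Borel function
`ρ ∈ L¹(X)` whose curve integral is infinite along every curve of the family. -/
def ZeroMod (μ : Measure X) (Γ : Set (Curve X)) : Prop :=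
  ∃ ρ : X → ℝ≥0∞, Measurable ρ ∧ (∫⁻ x, ρ x ∂μ) < ∞ ∧ ∀ γ ∈ Γ, γ.integral ρ = ∞

/-- `g` is a `1`-weak upper gradient of `u` in `A`: `g` is nonnegative, `μ`-measurable,
and the upper gradient inequality holds along `1`-a.e. curve in `A`. -/
def IsWeakUpperGradientOn (μ : Measure X) (u : X → ℝ) (g : X → ℝ≥0∞) (A : Set X) : Prop :=
  AEMeasurable g μ ∧ ZeroMod μ {γ : Curve X | γ.In A ∧ ¬ UGIneq u g γ}

/-- A nonnegative function `g` belongs to `L¹_loc(A)`. -/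
def LIntegrableLocOn (μ : Measure X) (g : X → ℝ≥0∞) (A : Set X) : Prop :=
  ∀ x ∈ A, ∃ r > (0 : ℝ), (∫⁻ y in A ∩ Metric.ball x r, g y ∂μ) < ∞

/-- `g` is the minimal `1`-weak upper gradient of `u` in `A`: a `1`-weak upper gradient
satisfying `g ≤ g'` `μ`-a.e. in `A` for every `1`-weak upper gradient `g' ∈ L¹_loc(A)`. -/
def IsMinimalWUG (μ : Measure X) (u : X → ℝ) (g : X → ℝ≥0∞) (A : Set X) : Prop :=
  IsWeakUpperGradientOn μ u g A ∧
    ∀ g' : X → ℝ≥0∞, IsWeakUpperGradientOn μ u g' A → LIntegrableLocOn μ g' A →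
      ∀ᵐ x ∂(μ.restrict A), g x ≤ g' x

/-- The Newtonian norm `‖u‖_{N^{1,1}(A)}` (valued in `ℝ≥0∞`). -/
def NNorm (μ : Measure X) (A : Set X) (u : X → ℝ) : ℝ≥0∞ :=
  (∫⁻ x in A, ENNReal.ofReal |u x| ∂μ) +
    ⨅ (g : X → ℝ≥0∞) (_ : IsWeakUpperGradientOn μ u g A), ∫⁻ x in A, g x ∂μ

/-- `u ∈ N^{1,1}(A)`. -/
def MemN11 (μ : Measure X) (A : Set X) (u : X → ℝ) : Prop :=
  NNorm μ A u < ∞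

/-- `u ∈ N^{1,1}_loc(A)`: every point of `A` has a ball `B` with `u ∈ N^{1,1}(A ∩ B)`. -/
def MemN11Loc (μ : Measure X) (A : Set X) (u : X → ℝ) : Prop :=
  ∀ x ∈ A, ∃ r > (0 : ℝ), NNorm μ (A ∩ Metric.ball x r) u < ∞

/-- `u ∈ N^{1,1}(Ω')` for every bounded open `Ω' ⊆ X`. -/
def MemN11LocBounded (μ : Measure X) (u : X → ℝ) : Prop :=
  ∀ Ω' : Set X, IsOpen Ω' → Bornology.IsBounded Ω' → NNorm μ Ω' u < ∞

/-- `u ∈ N^{1,1}_0(Ω)`: `u ∈ N^{1,1}(X)` and `u = 0` outside `Ω`. -/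
def MemN110 (μ : Measure X) (Ω : Set X) (u : X → ℝ) : Prop :=
  MemN11 μ Set.univ u ∧ ∀ x ∉ Ω, u x = 0

/-- The `1`-capacity `capa₁(A) = inf {‖u‖_{N^{1,1}(X)} : u ∈ N^{1,1}(X), u ≥ 1 on A}`. -/
def capa1 (μ : Measure X) (A : Set X) : ℝ≥0∞ :=
  ⨅ (u : X → ℝ) (_ : MemN11 μ Set.univ u) (_ : ∀ x ∈ A, 1 ≤ u x), NNorm μ Set.univ u

/-- `U` is `1`-quasiopen: for every `ε > 0` there is an open `G` with `capa₁(G) < ε`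
such that `U ∪ G` is open. -/
def QuasiOpen (μ : Measure X) (U : Set X) : Prop :=
  ∀ ε : ℝ, 0 < ε → ∃ G : Set X, IsOpen G ∧ capa1 μ G < ENNReal.ofReal ε ∧ IsOpen (U ∪ G)

/-- `u ∈ L¹_loc(A)`. -/
def MemL1Loc (μ : Measure X) (A : Set X) (u : X → ℝ) : Prop :=
  AEMeasurable u (μ.restrict A) ∧
    ∀ x ∈ A, ∃ r > (0 : ℝ), (∫⁻ y in A ∩ Metric.ball x r, ENNReal.ofReal |u y| ∂μ) < ∞

/-- `v i → u` in `L¹_loc(A)`: every `x ∈ A` has a ball `B` with `v i → u` in `L¹(A ∩ B)`. -/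
def L1LocConv (μ : Measure X) (A : Set X) (v : ℕ → X → ℝ) (u : X → ℝ) : Prop :=
  ∀ x ∈ A, ∃ r > (0 : ℝ),
    Filter.Tendsto (fun i => ∫⁻ y in A ∩ Metric.ball x r, ENNReal.ofReal |v i y - u y| ∂μ)
      Filter.atTop (𝓝 0)

/-- `u` is locally Lipschitz on `Ω`. -/
def LocLipOn (u : X → ℝ) (Ω : Set X) : Prop :=
  ∀ x ∈ Ω, ∃ r > (0 : ℝ), ∃ K : ℝ≥0, LipschitzOnWith K u (Ω ∩ Metric.ball x r)

/-- The total variation `‖Du‖(Ω)` of `u` in an open set `Ω`: the infimum of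
`liminf_i ∫_Ω g_{v i} dμ` over sequences of locally Lipschitz functions `v i → u`
in `L¹_loc(Ω)`, where `g_{v i}` is the minimal `1`-weak upper gradient of `v i` in `Ω`. -/
def tvOpen (μ : Measure X) (Ω : Set X) (u : X → ℝ) : ℝ≥0∞ :=
  ⨅ (v : ℕ → X → ℝ) (g : ℕ → X → ℝ≥0∞) (_ : ∀ i, LocLipOn (v i) Ω)
    (_ : ∀ i, IsMinimalWUG μ (v i) (g i) Ω) (_ : L1LocConv μ Ω v u),
    Filter.liminf (fun i => ∫⁻ x in Ω, g i x ∂μ) Filter.atTop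

/-- The total variation `‖Du‖(A)` of `u` in an arbitrary set `A`:
`inf {‖Du‖(Ω) : Ω ⊇ A open}`. -/
def tv (μ : Measure X) (A : Set X) (u : X → ℝ) : ℝ≥0∞ :=
  ⨅ (Ω : Set X) (_ : IsOpen Ω) (_ : A ⊆ Ω), tvOpen μ Ω u

/-- The perimeter `P(E, A) = ‖Dχ_E‖(A)` for arbitrary `A`. -/
def perim (μ : Measure X) (E A : Set X) : ℝ≥0∞ :=
  tv μ A (Set.indicator E (fun _ => (1 : ℝ)))

/-- The perimeter `P(E, Ω) = ‖Dχ_E‖(Ω)` for open `Ω`. -/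
def perimOpen (μ : Measure X) (E Ω : Set X) : ℝ≥0∞ :=
  tvOpen μ Ω (Set.indicator E (fun _ => (1 : ℝ)))

/-- The measure `μ` is doubling with constant `Cd`. -/
def Doubling (μ : Measure X) (Cd : ℝ) : Prop :=
  1 ≤ Cd ∧ ∀ (x : X) (r : ℝ), 0 < r →
    0 < μ (Metric.ball x (2 * r)) ∧
      μ (Metric.ball x (2 * r)) ≤ ENNReal.ofReal Cd * μ (Metric.ball x r) ∧
      μ (Metric.ball x r) < ∞

/-- The space supports a `(1,1)`-Poincaré inequality with constants `CP, lam`. -/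
def Poincare (μ : Measure X) (CP lam : ℝ) : Prop :=
  1 ≤ CP ∧ 1 ≤ lam ∧ ∀ (x : X) (r : ℝ), 0 < r → ∀ (u : X → ℝ) (g : X → ℝ≥0∞),
    MemL1Loc μ Set.univ u → IsUpperGradient u g →
      ENNReal.ofReal (⨍ y in Metric.ball x r, |u y - ⨍ z in Metric.ball x r, u z ∂μ| ∂μ)
        ≤ ENNReal.ofReal (CP * r) *
            ((∫⁻ y in Metric.ball x (lam * r), g y ∂μ) / μ (Metric.ball x (lam * r)))

/-- The restricted spherical Hausdorff content of codimension one. -/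
def HR (μ : Measure X) (R : ℝ) (A : Set X) : ℝ≥0∞ :=
  ⨅ (c : ℕ → X) (r : ℕ → ℝ) (_ : ∀ i, 0 < r i ∧ r i ≤ R)
    (_ : A ⊆ ⋃ i, Metric.ball (c i) (r i)),
    ∑' i, μ (Metric.ball (c i) (r i)) / ENNReal.ofReal (r i)

/-- The codimension-one Hausdorff measure `H(A) = lim_{R → 0} H_R(A)`. -/
def Hcodim (μ : Measure X) (A : Set X) : ℝ≥0∞ :=
  ⨆ (R : ℝ) (_ : 0 < R), HR μ R A

/-- The lower approximate limit `u^∧`. -/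
def lowerApprox (μ : Measure X) (u : X → ℝ) (x : X) : EReal :=
  sSup ((fun t : ℝ => (t : EReal)) ''
    {t : ℝ | Filter.Tendsto
      (fun r => μ (Metric.ball x r ∩ {y | u y < t}) / μ (Metric.ball x r))
      (𝓝[>] (0 : ℝ)) (𝓝 0)})

/-- The upper approximate limit `u^∨`. -/
def upperApprox (μ : Measure X) (u : X → ℝ) (x : X) : EReal :=
  sInf ((fun t : ℝ => (t : EReal)) ''
    {t : ℝ | Filter.Tendsto
      (fun r => μ (Metric.ball x r ∩ {y | t < u y}) / μ (Metric.ball x r))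
      (𝓝[>] (0 : ℝ)) (𝓝 0)})

/-- `u ∈ BV_loc(X)`: `u ∈ L¹_loc(X)` with `‖Du‖(Ω') < ∞` for every bounded open `Ω'`. -/
def MemBVLoc (μ : Measure X) (u : X → ℝ) : Prop :=
  MemL1Loc μ Set.univ u ∧
    ∀ Ω' : Set X, IsOpen Ω' → Bornology.IsBounded Ω' → tvOpen μ Ω' u < ∞

/-- The measure-theoretic interior `I_E`. -/
def mInterior (μ : Measure X) (E : Set X) : Set X :=
  {x | Filter.Tendsto (fun r => μ (Metric.ball x r \ E) / μ (Metric.ball x r))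
    (𝓝[>] (0 : ℝ)) (𝓝 0)}

/-- The measure-theoretic exterior `O_E`. -/
def mExterior (μ : Measure X) (E : Set X) : Set X :=
  {x | Filter.Tendsto (fun r => μ (Metric.ball x r ∩ E) / μ (Metric.ball x r))
    (𝓝[>] (0 : ℝ)) (𝓝 0)}

/-- The measure-theoretic boundary `∂*E`: the points where both `E` and its complement
have positive upper density. -/
def mBoundary (μ : Measure X) (E : Set X) : Set X :=
  {x | 0 < Filter.limsup (fun r => μ (Metric.ball x r ∩ E) / μ (Metric.ball x r))
        (𝓝[>] (0 : ℝ)) ∧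
       0 < Filter.limsup (fun r => μ (Metric.ball x r \ E) / μ (Metric.ball x r))
        (𝓝[>] (0 : ℝ))}


/-!
The capacity dominates the measure, because `u ≥ 1` on `G` forces `‖u‖_{L¹(X)} ≥ μ(G)`. Choosing
open `G n` with `U ∪ G n` open and capacities tending to zero, the intersection of the `U ∪ G n`
is a `Gδ` set equal to `U ∪ ⋂ n, G n`, and `⋂ n, G n` is a null set.
-/

theorem nullMeasurableSet_of_forall_exists_union {α : Type*} [MeasurableSpace α] {μ : Measure α}
    {s : Set α}
    (h : ∀ ε : ℝ≥0, 0 < ε → ∃ t : Set α, μ t ≤ ε ∧ NullMeasurableSet (s ∪ t) μ) :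
    NullMeasurableSet s μ := by
  obtain ⟨ε, -, ε_pos, ε_lim⟩ := exists_seq_strictAnti_tendsto (0 : ℝ≥0)
  choose t measure_le hst using fun n => h (ε n) (ε_pos n)
  have iInter_null : μ (⋂ n, t n) = 0 := by
    refine nonpos_iff_eq_zero.mp (ge_of_tendsto' (ENNReal.tendsto_coe.mpr ε_lim) fun n => ?_)
    exact (measure_mono (iInter_subset t n)).trans (measure_le n)
  have hsInter : NullMeasurableSet (s ∪ ⋂ n, t n) μ := by
    rw [union_iInter]
    exact NullMeasurableSet.iInter hst
  exact hsInter.congr (union_ae_eq_left_of_ae_eq_empty (ae_eq_empty.mpr iInter_null))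

theorem measure_inter_le_NNorm {Y : Type*} [MetricSpace Y] [MeasurableSpace Y] {μ : Measure Y}
    {A G : Set Y} {u : Y → ℝ} (hG : MeasurableSet G) (one_le : ∀ x ∈ G, 1 ≤ u x) :
    μ (G ∩ A) ≤ NNorm μ A u :=
  calc μ (G ∩ A)
    _ = ∫⁻ _ in G, 1 ∂μ.restrict A := by rw [setLIntegral_one, Measure.restrict_apply hG]
    _ ≤ ∫⁻ x in G, ENNReal.ofReal |u x| ∂μ.restrict A :=
      setLIntegral_mono' hG fun x hx =>
        ENNReal.one_le_ofReal.mpr ((one_le x hx).trans (le_abs_self _))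
    _ ≤ ∫⁻ x in A, ENNReal.ofReal |u x| ∂μ := setLIntegral_le_lintegral G _
    _ ≤ NNorm μ A u := le_self_add

theorem measure_le_capa1 {Y : Type*} [MetricSpace Y] [MeasurableSpace Y] {μ : Measure Y}
    {G : Set Y} (hG : MeasurableSet G) :
    μ G ≤ capa1 μ G :=
  le_iInf fun _ => le_iInf fun _ => le_iInf fun one_le => by
    simpa only [inter_univ] using measure_inter_le_NNorm (A := univ) hG one_le

theorem quasiopen_measurable_general {μ : Measure X} {U : Set X} (hU : QuasiOpen μ U) :
    NullMeasurableSet U μ := by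
  refine nullMeasurableSet_of_forall_exists_union fun ε ε_pos => ?_
  obtain ⟨G, hG, capa_lt, hUG⟩ := hU ε ε_pos
  rw [ENNReal.ofReal_coe_nnreal] at capa_lt
  exact ⟨G, (measure_le_capa1 hG.measurableSet).trans capa_lt.le,
    hUG.measurableSet.nullMeasurableSet⟩

/-- Every `1`-quasiopen set is `μ`-measurable. -/
theorem quasiopen_measurable
    (μ : Measure X) (hcomp : CompleteSpace X)
    (hdoub : ∃ Cd : ℝ, Doubling μ Cd) (hpoin : ∃ CP lam : ℝ, Poincare μ CP lam)
    (U : Set X) (hU : QuasiOpen μ U) :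
    NullMeasurableSet U μ :=
  quasiopen_measurable_general hU

end PaperBV
end
end

section
/- Absolute continuity of the variation measure with respect to the 1-capacity: Let Ω ⊂ X be an open set and let u ∈ L^1_loc(Ω) with ‖Du‖(Ω) < ∞. Then for every ε > 0 there exists δ > 0 such that if A ⊂ Ω with capa_1(A) < δ, then ‖Du‖(A) < ε. -/
open MeasureTheory Filter Metric Set
open scoped Topology ENNReal NNReal symmDiff

noncomputable section

namespace PaperBV

variable {X : Type*} [MetricSpace X] [MeasurableSpace X] [BorelSpace X]

/-!
Suppose sets `A_j ⊆ Ω` satisfy `capa₁(A_j) < 4⁻ʲ` but `‖Du‖(A_j) ≥ ε`, and let `v_i → u` be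
locally Lipschitz with almost minimal energy in `Ω`. If `h_j` is a cutoff function with
`‖h_j‖_{N^{1,1}} ≲ 4⁻ʲ` which is `1` on a neighbourhood of most of the energy that `v_i` must carry
near `A_j`, then the truncations of `v_i` at height `2ʲ`, multiplied by `1 - h_j`, still converge to
`u` in `L¹_loc(Ω)`, while their energy drops by a fixed amount. This contradicts the definition of
`‖Du‖(Ω)`.

The test functions `w` of the capacity need be neither continuous nor measurable, so such Lipschitz
cutoffs have to be constructed. Take lower semicontinuous majorants `f` of `w` and `g` of an upper
gradient of `w`, and let `G_k ↑ g` be Lipschitz. The cost of leaving `x` along a curve `γ`, namely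
`f` at the endpoint of `γ` plus `∫_γ G_k`, has an infimum over coarse curves which is Lipschitz in
`x` with slope at most `G_k`. By Arzelà–Ascoli these infima increase to the cost computed with `g`,
which is at least `w(x) ≥ 1` on `A`; so the sets where they exceed `3/4` increase to a neighbourhood
of `A`. The Poincaré inequality enters only to show that `w` agrees almost everywhere with a
measurable function, since `w` is Lipschitz on sublevel sets of a maximal function.
-/

section Real

lemma ofReal_abs_sub_le_lintegral_of_abs_deriv_le {φ : ℝ → ℝ} {G : ℝ → ℝ≥0∞} {K : ℝ≥0} {a b : ℝ}
    (hab : a ≤ b) (hφ : LipschitzOnWith K φ (Icc a b))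
    (hG : ∀ᵐ t ∂volume.restrict (Icc a b), ENNReal.ofReal |deriv φ t| ≤ G t) :
    ENNReal.ofReal |φ a - φ b| ≤ ∫⁻ t in Icc a b, G t := by
  have hac : AbsolutelyContinuousOnInterval φ a b :=
    LipschitzOnWith.absolutelyContinuousOnInterval (by rwa [uIcc_of_le hab])
  calc ENNReal.ofReal |φ a - φ b| = ‖∫ t in Icc a b, deriv φ t‖ₑ := by
        rw [abs_sub_comm, ← hac.integral_deriv_eq_sub, intervalIntegral.integral_of_le hab,
          ← integral_Icc_eq_integral_Ioc, ← Real.enorm_eq_ofReal_abs]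
    _ ≤ ∫⁻ t in Icc a b, ‖deriv φ t‖ₑ := enorm_integral_le_lintegral_enorm _
    _ ≤ ∫⁻ t in Icc a b, G t := lintegral_mono_ae <| by
        simpa only [Real.enorm_eq_ofReal_abs] using hG

lemma abs_deriv_le_of_eventually_abs_sub_le {φ ψ₁ ψ₂ : ℝ → ℝ} {t a b : ℝ} (ha : 0 ≤ a)
    (hb : 0 ≤ b) (h₁ : DifferentiableAt ℝ ψ₁ t) (h₂ : DifferentiableAt ℝ ψ₂ t)
    (h : ∀ᶠ s in 𝓝 t, |φ s - φ t| ≤ a * |ψ₁ s - ψ₁ t| + b * |ψ₂ s - ψ₂ t|) :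
    |deriv φ t| ≤ a * |deriv ψ₁ t| + b * |deriv ψ₂ t| := by
  by_cases hφ : DifferentiableAt ℝ φ t
  · have slope_φ := (hasDerivAt_iff_tendsto_slope.1 hφ.hasDerivAt).abs
    have slope_ψ₁ := (hasDerivAt_iff_tendsto_slope.1 h₁.hasDerivAt).abs
    have slope_ψ₂ := (hasDerivAt_iff_tendsto_slope.1 h₂.hasDerivAt).abs
    refine le_of_tendsto_of_tendsto slope_φ ((slope_ψ₁.const_mul a).add (slope_ψ₂.const_mul b)) ?_
    filter_upwards [h.filter_mono nhdsWithin_le_nhds] with s hs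
    simp only [slope_def_field, abs_div]
    rw [← mul_div_assoc, ← mul_div_assoc, ← add_div]
    gcongr
  · rw [deriv_zero_of_not_differentiableAt hφ, abs_zero]
    positivity

lemma abs_deriv_le_of_eventually_sub_le {φ : ℝ → ℝ} {t c : ℝ} (hc : 0 ≤ c)
    (h : ∀ᶠ s in 𝓝 t, φ t - φ s ≤ c * |s - t|) : |deriv φ t| ≤ c := by
  by_cases hφ : DifferentiableAt ℝ φ t
  · have slope := hasDerivAt_iff_tendsto_slope.1 hφ.hasDerivAt
    refine abs_le.2 ⟨?_, ?_⟩
    · refine ge_of_tendsto (slope.mono_left (nhdsGT_le_nhdsNE t)) ?_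
      filter_upwards [h.filter_mono nhdsWithin_le_nhds, self_mem_nhdsWithin] with s hs hts
      have hpos : 0 < s - t := sub_pos.2 hts
      rw [abs_of_pos hpos] at hs
      rw [slope_def_field, le_div_iff₀ hpos]
      linarith
    · refine le_of_tendsto (slope.mono_left (nhdsLT_le_nhdsNE t)) ?_
      filter_upwards [h.filter_mono nhdsWithin_le_nhds, self_mem_nhdsWithin] with s hs hts
      have hneg : s - t < 0 := sub_neg.2 hts
      rw [abs_of_neg hneg] at hs
      rw [slope_def_field, div_le_iff_of_neg hneg]
      linarith
  · rwa [deriv_zero_of_not_differentiableAt hφ, abs_zero]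

lemma ae_abs_deriv_le_of_abs_sub_le_integral {φ f : ℝ → ℝ} {a b : ℝ}
    (hf : IntervalIntegrable f volume a b)
    (h : ∀ s t, a ≤ s → s ≤ t → t ≤ b → |φ s - φ t| ≤ ∫ r in s..t, f r) :
    ∀ᵐ t ∂volume.restrict (Icc a b), |deriv φ t| ≤ |f t| := by
  rw [← restrict_Ioo_eq_restrict_Icc, ae_restrict_iff' measurableSet_Ioo]
  filter_upwards [hf.ae_hasDerivAt_integral] with t ht htab
  have hab : a ≤ b := (htab.1.trans htab.2).le
  have hderiv := ht (by simpa [uIcc_of_le hab] using Ioo_subset_Icc_self htab) a left_mem_uIcc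
  have hint : ∀ s ∈ Icc a b, IntervalIntegrable f volume a s := fun s hs =>
    hf.mono_set (uIcc_subset_uIcc_left (by rwa [uIcc_of_le hab]))
  have hsub : ∀ᶠ s in 𝓝 t, |φ s - φ t| ≤
      1 * |(∫ r in a..s, f r) - ∫ r in a..t, f r| + 0 * |(0 : ℝ) - 0| := by
    filter_upwards [Ioo_mem_nhds htab.1 htab.2] with s hs
    rw [intervalIntegral.integral_interval_sub_left (hint s (Ioo_subset_Icc_self hs))
      (hint t (Ioo_subset_Icc_self htab)), zero_mul, add_zero, one_mul]
    rcases le_total s t with hst | hst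
    · rw [intervalIntegral.integral_symm, abs_neg]
      exact (h s t hs.1.le hst htab.2.le).trans (le_abs_self _)
    · rw [abs_sub_comm]
      exact (h t s htab.1.le hst hs.2.le).trans (le_abs_self _)
  simpa [hderiv.deriv] using abs_deriv_le_of_eventually_abs_sub_le zero_le_one le_rfl
    hderiv.differentiableAt (differentiableAt_const 0) hsub

lemma ae_ofReal_abs_deriv_le_of_abs_sub_le_lintegral {φ : ℝ → ℝ} {G : ℝ → ℝ≥0∞} {a b : ℝ}
    (hab : a ≤ b) (hGm : AEMeasurable G (volume.restrict (Icc a b)))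
    (hGi : ∫⁻ t in Icc a b, G t ≠ ∞)
    (h : ∀ s t, a ≤ s → s ≤ t → t ≤ b → ENNReal.ofReal |φ s - φ t| ≤ ∫⁻ r in Icc s t, G r) :
    ∀ᵐ t ∂volume.restrict (Icc a b), ENNReal.ofReal |deriv φ t| ≤ G t := by
  have hG : IntervalIntegrable (fun t => (G t).toReal) volume a b :=
    (intervalIntegrable_iff_integrableOn_Icc_of_le hab).2
      (integrable_toReal_of_lintegral_ne_top hGm hGi)
  have hsub : ∀ s t, a ≤ s → s ≤ t → t ≤ b → |φ s - φ t| ≤ ∫ r in s..t, (G r).toReal := by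
    intro s t has hst htb
    have hle : volume.restrict (Icc s t) ≤ volume.restrict (Icc a b) :=
      Measure.restrict_mono (Icc_subset_Icc has htb) le_rfl
    rw [intervalIntegral.integral_of_le hst, ← integral_Icc_eq_integral_Ioc,
      integral_toReal (hGm.mono_measure hle) (ae_mono hle (ae_lt_top' hGm hGi)),
      ← ENNReal.ofReal_le_iff_le_toReal (ne_top_of_le_ne_top hGi (lintegral_mono' hle le_rfl))]
    exact h s t has hst htb
  filter_upwards [ae_abs_deriv_le_of_abs_sub_le_integral hG hsub] with t ht
  rw [ENNReal.abs_toReal] at ht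
  exact ENNReal.ofReal_le_of_le_toReal ht

end Real

section Curve

variable {Y : Type*} [MetricSpace Y] {γ : Curve Y} {v : Y → ℝ} {g : Y → ℝ≥0∞} {Ω : Set Y}

/-- The restriction of a curve to the parameter interval `[s, t]`, reparametrized to start at
time `0`. -/
def Curve.subcurve (γ : Curve Y) {s t : ℝ} (hs : 0 ≤ s) (hst : s ≤ t) (ht : t ≤ γ.len) :
    Curve Y where
  len := t - s
  len_nonneg := sub_nonneg.2 hst
  toFun r := γ.toFun (s + r)
  lip := by
    have hshift : LipschitzOnWith 1 (fun r : ℝ => s + r) (Icc 0 (t - s)) :=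
      (isometry_add_left s).lipschitz.lipschitzOnWith
    have hmaps : MapsTo (fun r : ℝ => s + r) (Icc 0 (t - s)) (Icc 0 γ.len) := fun r hr =>
      ⟨add_nonneg hs hr.1, (le_sub_iff_add_le'.1 hr.2).trans ht⟩
    exact mul_one (1 : ℝ≥0) ▸ γ.lip.comp hshift hmaps

lemma Curve.In.subcurve (h : γ.In Ω) {s t : ℝ} (hs : 0 ≤ s) (hst : s ≤ t) (ht : t ≤ γ.len) :
    (γ.subcurve hs hst ht).In Ω := fun _ hr =>
  h _ ⟨add_nonneg hs hr.1, (le_sub_iff_add_le'.1 hr.2).trans ht⟩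

lemma Curve.integral_subcurve {s t : ℝ} (hs : 0 ≤ s) (hst : s ≤ t) (ht : t ≤ γ.len) :
    (γ.subcurve hs hst ht).integral g = ∫⁻ r in Icc s t, g (γ.toFun r) := by
  have hpre : (fun r : ℝ => s + r) ⁻¹' Icc s t = Icc 0 (t - s) := by
    rw [preimage_const_add_Icc, sub_self]
  rw [← (measurePreserving_add_left volume s).setLIntegral_comp_preimage_emb
    (measurableEmbedding_addLeft s) fun r => g (γ.toFun r), hpre]
  rfl

lemma Curve.integral_subcurve_le {s t : ℝ} (hs : 0 ≤ s) (hst : s ≤ t) (ht : t ≤ γ.len) :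
    (γ.subcurve hs hst ht).integral g ≤ γ.integral g := by
  rw [integral_subcurve]
  exact lintegral_mono_set (Icc_subset_Icc hs ht)

lemma UGIneq.subcurve_iff {s t : ℝ} (hs : 0 ≤ s) (hst : s ≤ t) (ht : t ≤ γ.len) :
    UGIneq v g (γ.subcurve hs hst ht) ↔
      ENNReal.ofReal |v (γ.toFun s) - v (γ.toFun t)| ≤ ∫⁻ r in Icc s t, g (γ.toFun r) := by
  rw [UGIneq, Curve.integral_subcurve]
  simp only [Curve.subcurve, add_zero, add_sub_cancel]

lemma LocLipOn.exists_lipschitzOnWith_comp (hv : LocLipOn v Ω) (hγ : γ.In Ω) :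
    ∃ K : ℝ≥0, LipschitzOnWith K (fun t => v (γ.toFun t)) (Icc 0 γ.len) := by
  refine LocallyLipschitzOn.exists_lipschitzOnWith_of_compact isCompact_Icc fun t ht => ?_
  obtain ⟨r, hr, K, hK⟩ := hv _ (hγ t ht)
  refine ⟨K, γ.toFun ⁻¹' ball (γ.toFun t) r ∩ Icc 0 γ.len,
    inter_mem (γ.lip.continuousOn t ht (ball_mem_nhds _ hr)) self_mem_nhdsWithin, ?_⟩
  exact mul_one K ▸ hK.comp (γ.lip.mono inter_subset_right) fun s hs => ⟨hγ s hs.2, hs.1⟩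

/-- The infinitesimal form `|(v ∘ γ)'| ≤ g ∘ γ` of the upper gradient inequality, almost everywhere
along `γ`. Where `v ∘ γ` is not differentiable Lean's `deriv` vanishes, so the bound has its usual
meaning only for functions that are Lipschitz along `γ`. -/
def Curve.DerivLE (γ : Curve Y) (v : Y → ℝ) (g : Y → ℝ≥0∞) : Prop :=
  ∀ᵐ t ∂volume.restrict (Icc 0 γ.len),
    ENNReal.ofReal |deriv (fun s => v (γ.toFun s)) t| ≤ g (γ.toFun t)

lemma Curve.DerivLE.ugIneq (h : γ.DerivLE v g) {K : ℝ≥0}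
    (hv : LipschitzOnWith K (fun t => v (γ.toFun t)) (Icc 0 γ.len)) : UGIneq v g γ :=
  ofReal_abs_sub_le_lintegral_of_abs_deriv_le γ.len_nonneg hv h

lemma Curve.aemeasurable_comp [MeasurableSpace Y] [BorelSpace Y] (γ : Curve Y)
    (hg : Measurable g) :
    AEMeasurable (fun t => g (γ.toFun t)) (volume.restrict (Icc 0 γ.len)) :=
  hg.comp_aemeasurable (γ.lip.continuousOn.aemeasurable measurableSet_Icc)

end Curve

section ZeroMod

variable {Y : Type*} [MetricSpace Y] [MeasurableSpace Y] {μ : Measure Y} {Γ Γ' : Set (Curve Y)}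
  {v : Y → ℝ} {g : Y → ℝ≥0∞} {Ω : Set Y}

lemma ZeroMod.mono (h : ZeroMod μ Γ) (hsub : Γ' ⊆ Γ) : ZeroMod μ Γ' :=
  let ⟨ρ, hρ, hρi, hΓ⟩ := h
  ⟨ρ, hρ, hρi, fun γ hγ => hΓ γ (hsub hγ)⟩

lemma ZeroMod.iUnion {ι : Type*} [Countable ι] {Γ : ι → Set (Curve Y)}
    (h : ∀ i, ZeroMod μ (Γ i)) : ZeroMod μ (⋃ i, Γ i) := by
  choose ρ hρ hρi hΓ using h
  obtain ⟨ε, hε, hεsum⟩ := ENNReal.exists_pos_tsum_mul_lt_of_countable one_ne_zero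
    (fun i => ∫⁻ x, ρ i x ∂μ) fun i => (hρi i).ne
  refine ⟨fun x => ∑' i, ε i * ρ i x, Measurable.tsum fun i => (hρ i).const_mul _, ?_, ?_⟩
  · rw [lintegral_tsum fun i => ((hρ i).const_mul _).aemeasurable]
    simp only [lintegral_const_mul _ (hρ _)]
    simpa only [mul_comm] using hεsum.trans ENNReal.one_lt_top
  · intro γ hγ
    obtain ⟨i, hi⟩ := mem_iUnion.1 hγ
    refine top_le_iff.1 ?_
    calc ∞ = ε i * γ.integral (ρ i) := by
          rw [hΓ i γ hi, ENNReal.mul_top (by exact_mod_cast (hε i).ne')]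
      _ = γ.integral fun x => ε i * ρ i x := (lintegral_const_mul' _ _ ENNReal.coe_ne_top).symm
      _ ≤ _ := lintegral_mono fun t => ENNReal.le_tsum (f := fun i => ε i * ρ i (γ.toFun t)) i

lemma ZeroMod.union (h : ZeroMod μ Γ) (h' : ZeroMod μ Γ') : ZeroMod μ (Γ ∪ Γ') := by
  rw [union_eq_iUnion]
  exact ZeroMod.iUnion fun b => by cases b <;> assumption

lemma ZeroMod.setOf_exists_subcurve_mem (h : ZeroMod μ Γ) :
    ZeroMod μ {γ | ∃ (s t : ℝ) (hs : 0 ≤ s) (hst : s ≤ t) (ht : t ≤ γ.len),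
      γ.subcurve hs hst ht ∈ Γ} := by
  obtain ⟨ρ, hρ, hρi, hΓ⟩ := h
  refine ⟨ρ, hρ, hρi, ?_⟩
  rintro γ ⟨s, t, hs, hst, ht, hmem⟩
  exact top_le_iff.1 ((hΓ _ hmem).ge.trans (Curve.integral_subcurve_le hs hst ht))

/-- The derivative of `v` along `1`-almost every curve in `Ω` is bounded by `g`. For locally
Lipschitz `v` and locally integrable `g` this is equivalent to `g` being a `1`-weak upper gradient,
and it is local along curves, hence stable under infima and products. -/
def DerivLEOnAECurve (μ : Measure Y) (v : Y → ℝ) (g : Y → ℝ≥0∞) (Ω : Set Y) : Prop :=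
  ZeroMod μ {γ | γ.In Ω ∧ ¬ γ.DerivLE v g}

lemma DerivLEOnAECurve.isWeakUpperGradientOn (h : DerivLEOnAECurve μ v g Ω) (hv : LocLipOn v Ω)
    (hg : AEMeasurable g μ) : IsWeakUpperGradientOn μ v g Ω := by
  refine ⟨hg, h.mono ?_⟩
  rintro γ ⟨hγ, hnot⟩
  obtain ⟨K, hK⟩ := hv.exists_lipschitzOnWith_comp hγ
  exact ⟨hγ, fun hderiv => hnot (hderiv.ugIneq hK)⟩

lemma DerivLEOnAECurve.iInf {ι : Type*} [Countable ι] {g : ι → Y → ℝ≥0∞}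
    (h : ∀ i, DerivLEOnAECurve μ v (g i) Ω) : DerivLEOnAECurve μ v (fun x => ⨅ i, g i x) Ω := by
  refine (ZeroMod.iUnion h).mono ?_
  rintro γ ⟨hγ, hnot⟩
  by_contra hgood
  simp only [mem_iUnion, mem_ofPred_eq, not_exists, not_and, not_not] at hgood
  refine hnot ?_
  filter_upwards [ae_all_iff.2 fun i => hgood i hγ] with t ht
  exact le_iInf ht

end ZeroMod

section AlmostEveryCurve

variable {μ : Measure X} {v : X → ℝ} {g : X → ℝ≥0∞} {Ω : Set X}

lemma zeroMod_setOf_not_ae {p : X → Prop} (hp : ∀ᵐ x ∂μ, p x) :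
    ZeroMod μ {γ : Curve X | ¬ ∀ᵐ t ∂volume.restrict (Icc 0 γ.len), p (γ.toFun t)} := by
  obtain ⟨N, hsub, hN, hμN⟩ := exists_measurable_superset_of_null hp
  have hρ : Measurable (N.indicator fun _ => (∞ : ℝ≥0∞)) := measurable_const.indicator hN
  refine ⟨_, hρ, by simp [lintegral_indicator hN, hμN], fun γ hγ => ?_⟩
  by_contra hne
  refine hγ ?_
  filter_upwards [ae_lt_top' (γ.aemeasurable_comp hρ) hne] with t ht
  by_contra hpt
  rw [indicator_of_mem (hsub hpt)] at ht
  exact lt_irrefl _ ht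

lemma LIntegrableLocOn.zeroMod_setOf_integral_eq_top [SecondCountableTopology X]
    (hg : Measurable g) (hΩ : MeasurableSet Ω) (h : LIntegrableLocOn μ g Ω) :
    ZeroMod μ {γ | γ.In Ω ∧ γ.integral g = ∞} := by
  choose! r hr hfin using h
  obtain ⟨T, hTΩ, hTc, hT⟩ := TopologicalSpace.countable_cover_nhdsWithin (s := Ω)
    (f := fun x => ball x (r x)) fun x hx => mem_nhdsWithin_of_mem_nhds (ball_mem_nhds _ (hr x hx))
  have : Countable T := hTc.to_subtype
  let B : T → Set X := fun i => Ω ∩ ball (i : X) (r i)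
  have hB : ∀ i, MeasurableSet (B i) := fun i => hΩ.inter measurableSet_ball
  have hzero : ∀ i, ZeroMod μ {γ : Curve X | γ.integral ((B i).indicator g) = ∞} := fun i =>
    ⟨_, hg.indicator (hB i), by rw [lintegral_indicator (hB i)]; exact hfin i (hTΩ i.2),
      fun γ hγ => hγ⟩
  refine (ZeroMod.iUnion hzero).mono ?_
  rintro γ ⟨hγ, htop⟩
  obtain ⟨F, hF⟩ := (isCompact_Icc.image_of_continuousOn γ.lip.continuousOn).elim_finite_subcover
    (fun i : T => ball (i : X) (r i)) (fun i => isOpen_ball) <| by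
      rw [← biUnion_eq_iUnion T fun x _ => ball x (r x)]
      exact (image_subset_iff.2 hγ).trans hT
  have hle : γ.integral g ≤ ∑ i ∈ F, γ.integral ((B i).indicator g) := by
    simp only [Curve.integral]
    rw [← lintegral_finsetSum' _ fun i _ => γ.aemeasurable_comp (hg.indicator (hB i))]
    refine setLIntegral_mono' measurableSet_Icc fun t ht => ?_
    obtain ⟨i, hiF, hti⟩ := mem_iUnion₂.1 (hF (mem_image_of_mem _ ht))
    calc g (γ.toFun t) = (B i).indicator g (γ.toFun t) :=
          (indicator_of_mem (show γ.toFun t ∈ B i from ⟨hγ t ht, hti⟩) g).symm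
      _ ≤ _ := Finset.single_le_sum (f := fun i => (B i).indicator g (γ.toFun t))
          (fun _ _ => zero_le) hiF
  rw [htop, top_le_iff, ENNReal.sum_eq_top] at hle
  obtain ⟨i, -, hi⟩ := hle
  exact mem_iUnion.2 ⟨i, hi⟩

lemma IsWeakUpperGradientOn.derivLEOnAECurve [SecondCountableTopology X]
    (h : IsWeakUpperGradientOn μ v g Ω) (hΩ : MeasurableSet Ω) (hloc : LIntegrableLocOn μ g Ω) :
    DerivLEOnAECurve μ v g Ω := by
  obtain ⟨hg, hzero⟩ := h
  have hmk_loc : LIntegrableLocOn μ (hg.mk g) Ω := fun x hx => by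
    obtain ⟨r, hr, hfin⟩ := hloc x hx
    exact ⟨r, hr, by rwa [← lintegral_congr_ae (ae_restrict_of_ae hg.ae_eq_mk)]⟩
  refine ((hzero.setOf_exists_subcurve_mem.union (zeroMod_setOf_not_ae hg.ae_eq_mk)).union
    (hmk_loc.zeroMod_setOf_integral_eq_top hg.measurable_mk hΩ)).mono ?_
  rintro γ ⟨hγ, hnot⟩
  by_contra hgood
  simp only [mem_union, mem_ofPred_eq, not_or, not_exists, not_and, not_not] at hgood
  obtain ⟨⟨hsub, hmk⟩, hfin⟩ := hgood
  refine hnot ?_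
  have hderiv := ae_ofReal_abs_deriv_le_of_abs_sub_le_lintegral (φ := fun t => v (γ.toFun t))
    γ.len_nonneg (γ.aemeasurable_comp hg.measurable_mk) (hfin hγ) fun s t hs hst ht => by
      rw [← setLIntegral_congr_fun_ae measurableSet_Icc
        ((ae_restrict_iff' measurableSet_Icc).1 (ae_restrict_of_ae_restrict_of_subset
          (Icc_subset_Icc hs ht) hmk))]
      exact (UGIneq.subcurve_iff hs hst ht).1 (hsub s t hs hst ht (hγ.subcurve hs hst ht))
  filter_upwards [hderiv, hmk] with t ht hmkt
  rwa [hmkt]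

end AlmostEveryCurve

section MinimalWeakUpperGradient

-- Finiteness of the integral of `(1 + g)⁻¹` lets minimality be tested by a single integral even
-- when no member of `𝒢` is integrable.
lemma exists_mem_forall_ae_le_of_iInf_mem {α : Type*} [MeasurableSpace α] {ν : Measure α}
    [SigmaFinite ν] {𝒢 : Set (α → ℝ≥0∞)} (hne : 𝒢.Nonempty) (hmeas : ∀ g ∈ 𝒢, AEMeasurable g ν)
    (hinf : ∀ g : ℕ → α → ℝ≥0∞, (∀ n, g n ∈ 𝒢) → (fun x => ⨅ n, g n x) ∈ 𝒢) :
    ∃ g ∈ 𝒢, ∀ g' ∈ 𝒢, g ≤ᵐ[ν] g' := by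
  let J : (α → ℝ≥0∞) → ℝ≥0∞ := fun g => ∫⁻ x, (1 + g x)⁻¹ ∂ν.toFinite
  have J_anti : ∀ {g g'}, g ≤ g' → J g' ≤ J g := fun hle =>
    lintegral_mono fun x => ENNReal.inv_le_inv.2 (add_le_add_right (hle x) 1)
  have J_ne_top : ∀ g, J g ≠ ∞ := fun g => ne_top_of_le_ne_top (measure_ne_top ν.toFinite univ) <|
    (lintegral_mono fun x => ENNReal.inv_le_one.2 le_self_add).trans_eq lintegral_one
  obtain ⟨a, -, ha, ha_mem⟩ := exists_seq_tendsto_sSup (hne.image J) (OrderTop.bddAbove _)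
  choose g hg hga using ha_mem
  let g₀ : α → ℝ≥0∞ := fun x => ⨅ n, g n x
  have hg₀ : g₀ ∈ 𝒢 := hinf g hg
  have J_le : ∀ g' ∈ 𝒢, J g' ≤ J g₀ := fun g' hg' =>
    (le_sSup (mem_image_of_mem J hg')).trans <| le_of_tendsto' ha fun n =>
      hga n ▸ J_anti fun x => iInf_le _ n
  refine ⟨g₀, hg₀, fun g' hg' => ?_⟩
  have hinf_mem : (fun x => ⨅ n : ℕ, (if n = 0 then g₀ else g') x) ∈ 𝒢 :=
    hinf _ fun n => by split_ifs <;> assumption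
  set m : α → ℝ≥0∞ := fun x => ⨅ n : ℕ, (if n = 0 then g₀ else g') x
  have hm₀ : m ≤ g₀ := fun x => iInf_le_of_le 0 le_rfl
  have hm' : m ≤ g' := fun x => iInf_le_of_le 1 le_rfl
  have heq : (fun x => (1 + g₀ x)⁻¹) =ᵐ[ν.toFinite] fun x => (1 + m x)⁻¹ :=
    ae_eq_of_ae_le_of_lintegral_le
      (ae_of_all _ fun x => ENNReal.inv_le_inv.2 (add_le_add_right (hm₀ x) 1)) (J_ne_top g₀)
      (((hmeas m hinf_mem).mono_ac (toFinite_absolutelyContinuous ν)).const_add 1).inv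
      (J_le m hinf_mem)
  filter_upwards [(absolutelyContinuous_toFinite ν).ae_le heq] with x hx
  rw [(ENNReal.add_right_inj ENNReal.one_ne_top).1 (inv_inj.1 hx)]
  exact hm' x

variable {μ : Measure X} {v : X → ℝ} {Ω : Set X}

lemma LocLipOn.exists_isMinimalWUG [SecondCountableTopology X] [SigmaFinite μ]
    (hv : LocLipOn v Ω) (hΩ : MeasurableSet Ω) : ∃ g, IsMinimalWUG μ v g Ω := by
  obtain ⟨g, ⟨hg, hderiv⟩, hmin⟩ := exists_mem_forall_ae_le_of_iInf_mem (ν := μ.restrict Ω)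
    (𝒢 := {g | AEMeasurable g μ ∧ DerivLEOnAECurve μ v g Ω})
    ⟨fun _ => ∞, aemeasurable_const, 0, measurable_zero, by simp,
      fun γ hγ => absurd (ae_of_all _ fun t => le_top) hγ.2⟩
    (fun g hg => hg.1.restrict)
    fun g hg => ⟨AEMeasurable.iInf fun n => (hg n).1, DerivLEOnAECurve.iInf fun n => (hg n).2⟩
  exact ⟨g, hderiv.isWeakUpperGradientOn hv hg, fun g' hg' hloc =>
    hmin g' ⟨hg'.1, hg'.derivLEOnAECurve hΩ hloc⟩⟩

end MinimalWeakUpperGradient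

section Doubling

variable {Y : Type*} [MetricSpace Y] [MeasurableSpace Y] {μ : Measure Y} {Cd : ℝ}

lemma Doubling.measure_ball_lt_top (h : Doubling μ Cd) (x : Y) (r : ℝ) : μ (ball x r) < ∞ := by
  rcases le_or_gt r 0 with hr | hr
  · simp [ball_eq_empty.2 hr]
  · exact (h.2 x r hr).2.2

lemma Doubling.measure_ball_pos (h : Doubling μ Cd) (x : Y) {r : ℝ} (hr : 0 < r) :
    0 < μ (ball x r) := by
  simpa only [mul_div_cancel₀ r two_ne_zero] using (h.2 x (r / 2) (half_pos hr)).1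

lemma Doubling.measure_ball_two_pow_mul_le (h : Doubling μ Cd) (x : Y) {r : ℝ} (hr : 0 < r)
    (n : ℕ) : μ (ball x (2 ^ n * r)) ≤ ENNReal.ofReal Cd ^ n * μ (ball x r) := by
  induction n with
  | zero => simp
  | succ n ih =>
    calc μ (ball x (2 ^ (n + 1) * r)) = μ (ball x (2 * (2 ^ n * r))) := by ring_nf
      _ ≤ ENNReal.ofReal Cd * μ (ball x (2 ^ n * r)) := (h.2 x _ (by positivity)).2.1
      _ ≤ ENNReal.ofReal Cd * (ENNReal.ofReal Cd ^ n * μ (ball x r)) := by gcongr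
      _ = ENNReal.ofReal Cd ^ (n + 1) * μ (ball x r) := by rw [pow_succ', mul_assoc]

lemma Doubling.isLocallyFiniteMeasure (h : Doubling μ Cd) : IsLocallyFiniteMeasure μ :=
  ⟨fun x => ⟨ball x 1, ball_mem_nhds _ one_pos, h.measure_ball_lt_top x 1⟩⟩

lemma Doubling.isUnifLocDoublingMeasure (h : Doubling μ Cd) : IsUnifLocDoublingMeasure μ := by
  refine ⟨(Cd ^ 2).toNNReal, ?_⟩
  filter_upwards [self_mem_nhdsWithin] with r (hr : 0 < r) x
  calc μ (closedBall x (2 * r)) ≤ μ (ball x (2 ^ 2 * r)) :=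
        measure_mono (closedBall_subset_ball (by linarith))
    _ ≤ ENNReal.ofReal Cd ^ 2 * μ (ball x r) := h.measure_ball_two_pow_mul_le x hr 2
    _ ≤ ENNReal.ofReal (Cd ^ 2) * μ (closedBall x r) := by
        rw [ENNReal.ofReal_pow (zero_le_one.trans h.1)]
        gcongr
        exact ball_subset_closedBall

lemma Doubling.finite_of_pairwise_le_dist [OpensMeasurableSpace Y] (h : Doubling μ Cd) {ι : Type*}
    {c : ι → Y} {x : Y} {R ε : ℝ} (hε : 0 < ε) (hc : ∀ i, c i ∈ closedBall x R)
    (hsep : Pairwise fun i j => ε ≤ dist (c i) (c j)) : Finite ι := by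
  cases isEmpty_or_nonempty ι with
  | inl _ => infer_instance
  | inr hι =>
  have hR : 0 ≤ R := dist_nonneg.trans (mem_closedBall.1 (hc hι.some))
  obtain ⟨m, hm⟩ := pow_unbounded_of_one_lt ((R + R + ε) / (ε / 2)) one_lt_two
  rw [div_lt_iff₀ (half_pos hε)] at hm
  have hball : ∀ i, μ (ball x (R + ε)) / ENNReal.ofReal Cd ^ m ≤ μ (ball (c i) (ε / 2)) := by
    intro i
    refine ENNReal.div_le_of_le_mul' ((measure_mono (ball_subset_ball' ?_)).trans
      (h.measure_ball_two_pow_mul_le (c i) (half_pos hε) m))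
    linarith [mem_closedBall'.1 (hc i)]
  have hdisj : Pairwise (Function.onFun Disjoint fun i => ball (c i) (ε / 2)) := fun i j hij =>
    ball_disjoint_ball (by linarith [hsep hij])
  have hunion : ⋃ i, ball (c i) (ε / 2) ⊆ ball x (R + ε) :=
    iUnion_subset fun i => ball_subset_ball' (by linarith [mem_closedBall.1 (hc i)])
  have hpos : 0 < μ (ball x (R + ε)) / ENNReal.ofReal Cd ^ m :=
    ENNReal.div_pos (h.measure_ball_pos x (by linarith)).ne'
      (ENNReal.pow_ne_top ENNReal.ofReal_ne_top)
  have hfin := Measure.finite_const_le_meas_of_disjoint_iUnion μ hpos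
    (fun _ => measurableSet_ball) hdisj
    (measure_ne_top_of_subset hunion (h.measure_ball_lt_top x (R + ε)).ne)
  exact finite_univ_iff.1 (hfin.subset fun i _ => hball i)

lemma Doubling.properSpace [OpensMeasurableSpace Y] [CompleteSpace Y] (h : Doubling μ Cd) :
    ProperSpace Y := by
  refine ⟨fun x R => TotallyBounded.isCompact_of_isClosed
    (totallyBounded_iff.2 fun ε hε => ?_) isClosed_closedBall⟩
  by_contra! hcon
  obtain ⟨c, hc, hsep⟩ := exists_seq_of_forall_finset_exists (· ∈ closedBall x R)
    (fun y z => ε ≤ dist z y) fun s _ => by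
      obtain ⟨y, hy, hys⟩ := not_subset.1 (hcon s s.finite_toSet)
      exact ⟨y, hy, fun z hz => not_lt.1 fun hlt => hys (mem_iUnion₂.2 ⟨z, hz, hlt⟩)⟩
  have hsep' : Pairwise fun i j => ε ≤ dist (c i) (c j) := by
    intro i j hij
    rcases hij.lt_or_gt with hlt | hlt
    · exact (hsep i j hlt).trans_eq (dist_comm _ _)
    · exact hsep j i hlt
  exact not_finite_iff_infinite.2 inferInstance (h.finite_of_pairwise_le_dist hε hc hsep')

end Doubling

section LipApprox

variable {Y : Type*} [PseudoEMetricSpace Y] (g : Y → ℝ≥0∞) (k : ℕ) (x : Y)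

/-- The inf-convolution approximation of `g` from below by `(k + 1)`-Lipschitz functions bounded by
`k + 1`; it increases to `g` when `g` is lower semicontinuous. -/
def lipApprox (g : Y → ℝ≥0∞) (k : ℕ) (x : Y) : ℝ≥0∞ :=
  ⨅ y, min (g y) (k + 1) + (k + 1) * edist x y

lemma lipApprox_le : lipApprox g k x ≤ g x :=
  (iInf_le _ x).trans (by simp)

lemma lipApprox_le_natCast_add_one : lipApprox g k x ≤ k + 1 :=
  (iInf_le _ x).trans (by simp)

lemma lipApprox_ne_top : lipApprox g k x ≠ ∞ :=
  ne_top_of_le_ne_top (by simp) (lipApprox_le_natCast_add_one g k x)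

lemma lipApprox_le_add_edist (y : Y) :
    lipApprox g k x ≤ lipApprox g k y + (k + 1) * edist x y := by
  simp only [lipApprox, ENNReal.iInf_add]
  refine iInf_mono fun z => ?_
  rw [add_assoc, ← mul_add, add_comm (edist y z)]
  gcongr
  exact edist_triangle _ _ _

lemma continuous_lipApprox : Continuous (lipApprox g k) :=
  continuous_of_le_add_edist (k + 1) (by simp) (lipApprox_le_add_edist g k)

variable {g}

lemma one_le_lipApprox (hg : ∀ y, 1 ≤ g y) : 1 ≤ lipApprox g k x :=
  le_iInf fun y => (le_min (hg y) le_add_self).trans le_self_add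

lemma lipApprox_mono : Monotone (lipApprox g) := fun k m hkm x =>
  iInf_mono fun y => by gcongr

lemma iSup_lipApprox (hg : LowerSemicontinuous g) : ⨆ k, lipApprox g k x = g x := by
  refine le_antisymm (iSup_le fun k => lipApprox_le g k x) (le_of_forall_lt fun a ha => ?_)
  obtain ⟨b, hab, hbx⟩ := exists_between ha
  obtain ⟨r, hr, hball⟩ := Metric.nhds_basis_eball.eventually_iff.1 (hg x b hbx)
  obtain ⟨n, hn⟩ := ENNReal.exists_nat_mul_gt (a := min r 1) (lt_min hr one_pos).ne' hbx.ne_top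
  refine hab.trans_le (le_iSup_of_le n (le_iInf fun y => ?_))
  have hbn : b ≤ n * min r 1 := hn.le
  rcases lt_or_ge (edist y x) r with hy | hy
  · have hbn' : b ≤ n + 1 := hbn.trans
      ((mul_le_mul_right (min_le_right r 1) _).trans (by rw [mul_one]; exact le_self_add))
    exact (le_min (hball hy).le hbn').trans le_self_add
  · rw [edist_comm]
    exact (hbn.trans (mul_le_mul' le_self_add ((min_le_left r 1).trans hy))).trans le_add_self

end LipApprox

section StayThen

variable {α : Type*} {l d : ℝ}

/-- The path that rests at `x` during `[0, d]` and then follows `γ`. -/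
def stayThen (x : α) (d : ℝ) (γ : ℝ → α) (t : ℝ) : α := if t < d then x else γ (t - d)

lemma setLIntegral_Icc_stayThen (G : α → ℝ≥0∞) (x : α) (γ : ℝ → α) (hd : 0 ≤ d) (hl : 0 ≤ l) :
    ∫⁻ t in Icc 0 (l + d), G (stayThen x d γ t) =
      G x * ENNReal.ofReal d + ∫⁻ t in Icc 0 l, G (γ t) := by
  have hdisj : Disjoint (Ico 0 d) (Icc d (l + d)) :=
    disjoint_left.2 fun _ h h' => h.2.not_ge h'.1
  rw [← Ico_union_Icc_eq_Icc hd (by linarith), lintegral_union measurableSet_Icc hdisj]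
  congr 1
  · rw [setLIntegral_congr_fun (g := fun _ => G x) measurableSet_Ico fun t ht => ?_]
    · rw [setLIntegral_const, Real.volume_Ico, sub_zero]
    · simp only [stayThen, if_pos ht.2]
  · rw [← (measurePreserving_add_right volume d).setLIntegral_comp_preimage_emb
      (measurableEmbedding_addRight d), preimage_add_const_Icc, sub_self, add_sub_cancel_right]
    refine setLIntegral_congr_fun measurableSet_Icc fun t ht => ?_
    simp only [stayThen, if_neg (not_lt.2 (le_add_of_nonneg_left ht.1)), add_sub_cancel_right]

end StayThen

section CoarseCurve

variable {Y : Type*} [PseudoMetricSpace Y] {r r' l : ℝ} {x y : Y} {γ : ℝ → Y}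
  {G G' f : Y → ℝ≥0∞}

/-- A possibly discontinuous path of length `l` starting at `x` that is `1`-Lipschitz up to jumps of
size `r`. It is frozen outside `[0, l]`. -/
structure IsCoarseCurve (r : ℝ) (x : Y) (l : ℝ) (γ : ℝ → Y) : Prop where
  len_nonneg : 0 ≤ l
  dist_start_le : ∀ t, dist x (γ t) ≤ max t 0
  dist_le : ∀ s t, dist (γ s) (γ t) ≤ dist s t + r
  eq_end : ∀ t, l ≤ t → γ t = γ l

lemma isCoarseCurve_const (hr : 0 ≤ r) (x : Y) : IsCoarseCurve r x 0 fun _ => x where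
  len_nonneg := le_rfl
  dist_start_le t := by simp
  dist_le s t := by rw [dist_self]; positivity
  eq_end _ _ := rfl

lemma IsCoarseCurve.mono (h : IsCoarseCurve r x l γ) (hr : r ≤ r') : IsCoarseCurve r' x l γ :=
  { h with dist_le := fun s t => (h.dist_le s t).trans (by gcongr) }

lemma IsCoarseCurve.mem_closedBall (h : IsCoarseCurve r x l γ) (t : ℝ) : γ t ∈ closedBall x l := by
  have hmin : γ t = γ (min t l) := by
    rcases le_total t l with ht | ht
    · rw [min_eq_left ht]
    · rw [min_eq_right ht, h.eq_end t ht]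
  rw [hmin, mem_closedBall']
  exact (h.dist_start_le _).trans (max_le (min_le_right _ _) h.len_nonneg)

lemma IsCoarseCurve.stayThen (h : IsCoarseCurve r y l γ) (hxy : dist x y ≤ r) :
    IsCoarseCurve r x (l + dist x y) (stayThen x (dist x y) γ) := by
  have hr : 0 ≤ r := dist_nonneg.trans hxy
  have hl := h.len_nonneg
  have hstart : ∀ t, dist x y ≤ t → dist x (γ (t - dist x y)) ≤ t := fun t ht => by
    have := h.dist_start_le (t - dist x y)
    rw [max_eq_left (sub_nonneg.2 ht)] at this
    linarith [dist_triangle x y (γ (t - dist x y))]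
  have hle : ∀ s t, s < dist x y → dist x y ≤ t → dist x (γ (t - dist x y)) ≤ dist s t + r :=
    fun s t hs ht => by
      rw [Real.dist_eq, abs_sub_comm]
      linarith [hstart t ht, le_abs_self (t - s)]
  constructor
  · positivity
  · intro t
    unfold PaperBV.stayThen
    split_ifs with ht
    · simp
    · exact (hstart t (not_lt.1 ht)).trans (le_max_left _ _)
  · intro s t
    unfold PaperBV.stayThen
    split_ifs with hs ht ht
    · rw [dist_self]; positivity
    · exact hle s t hs (not_lt.1 ht)
    · rw [dist_comm, dist_comm s]
      exact hle t s ht (not_lt.1 hs)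
    · simpa only [dist_sub_right] using h.dist_le (s - dist x y) (t - dist x y)
  · intro t ht
    unfold PaperBV.stayThen
    rw [if_neg (by linarith), if_neg (by linarith), h.eq_end _ (by linarith), add_sub_cancel_right]

/-- The cheapest way to leave `x` along a coarse curve, paying `G` per unit length on the way and
`f` at the end. -/
def coarseCost (G f : Y → ℝ≥0∞) (r : ℝ) (x : Y) : ℝ≥0∞ :=
  ⨅ (l : ℝ) (γ : ℝ → Y) (_ : IsCoarseCurve r x l γ), f (γ l) + ∫⁻ t in Icc 0 l, G (γ t)

lemma coarseCost_le (h : IsCoarseCurve r x l γ) :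
    coarseCost G f r x ≤ f (γ l) + ∫⁻ t in Icc 0 l, G (γ t) :=
  (iInf₂_le l γ).trans (iInf_le _ h)

lemma coarseCost_le_self (hr : 0 ≤ r) : coarseCost G f r x ≤ f x :=
  (coarseCost_le (isCoarseCurve_const hr x)).trans (by simp)

lemma coarseCost_mono (hG : G ≤ G') (hr : r' ≤ r) : coarseCost G f r x ≤ coarseCost G' f r' x :=
  le_iInf₂ fun _ _ => le_iInf fun h => (coarseCost_le (h.mono hr)).trans
    (add_le_add_right (lintegral_mono fun _ => hG _) _)

lemma coarseCost_le_mul_edist_add (hxy : dist x y ≤ r) :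
    coarseCost G f r x ≤ G x * edist x y + coarseCost G f r y := by
  simp only [coarseCost.eq_1 G f r y, ENNReal.add_iInf]
  refine le_iInf₂ fun l γ => le_iInf fun h => (coarseCost_le (h.stayThen hxy)).trans_eq ?_
  have hend : stayThen x (dist x y) γ (l + dist x y) = γ l := by
    simp only [stayThen, if_neg (not_lt.2 (le_add_of_nonneg_left h.len_nonneg)),
      add_sub_cancel_right]
  rw [hend, setLIntegral_Icc_stayThen G x γ dist_nonneg h.len_nonneg, edist_dist, add_left_comm]

end CoarseCurve

section CoarseLimit

lemma le_of_forall_pos_le_add_mul {a c C : ℝ≥0∞} (hC : C ≠ ∞)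
    (h : ∀ e : ℝ≥0, 0 < e → a ≤ c + C * e) : a ≤ c := by
  have hcoe : Tendsto (fun e : ℝ≥0 => (e : ℝ≥0∞)) (𝓝[>] 0) (𝓝 0) :=
    ENNReal.tendsto_coe.2 nhdsWithin_le_nhds
  have hlim : Tendsto (fun e : ℝ≥0 => c + C * e) (𝓝[>] 0) (𝓝 c) := by
    simpa only [mul_zero, add_zero] using
      tendsto_const_nhds.add (ENNReal.Tendsto.const_mul hcoe (Or.inr hC))
  exact ge_of_tendsto hlim (eventually_nhdsWithin_of_forall h)

lemma exists_lipschitzWith_tendstoUniformlyOn {ι S Y : Type*} [PseudoMetricSpace S]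
    [PseudoMetricSpace Y] (U : Ultrafilter ι) {r : ι → ℝ} (hr : Tendsto r U (𝓝 0)) {b : ι → S → Y}
    {K : Set Y} (hK : IsCompact K) (hbK : ∀ k t, b k t ∈ K)
    (hb : ∀ k s t, dist (b k s) (b k t) ≤ dist s t + r k) :
    ∃ β : S → Y, LipschitzWith 1 β ∧ ∀ C, IsCompact C → TendstoUniformlyOn b β U C := by
  have hlim : ∀ t, ∃ y, Tendsto (b · t) U (𝓝 y) := fun t => by
    obtain ⟨y, -, hy⟩ := hK.ultrafilter_le_nhds' (U.map (b · t))
      (Ultrafilter.mem_map.2 (univ_mem' (hbK · t)))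
    exact ⟨y, hy⟩
  choose β hβ using hlim
  have hβdist : ∀ s t, dist (β s) (β t) ≤ dist s t := fun s t =>
    le_of_tendsto_of_tendsto' ((hβ s).dist (hβ t))
      (by simpa only [add_zero] using tendsto_const_nhds.add hr) fun k => hb k s t
  refine ⟨β, LipschitzWith.of_dist_le_mul fun s t => ?_, fun C hC =>
    Metric.tendstoUniformlyOn_iff.2 fun ε hε => ?_⟩
  · simpa using hβdist s t
  obtain ⟨s, -, hsfin, hcover⟩ := hC.finite_cover_balls (e := ε / 4) (by positivity)
  have hs : ∀ᶠ k in (U : Filter ι), ∀ y ∈ s, dist (b k y) (β y) < ε / 4 :=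
    (eventually_all_finite hsfin).2 fun y _ => (hβ y).eventually (ball_mem_nhds _ (by positivity))
  filter_upwards [hs, hr.eventually (gt_mem_nhds (by positivity : 0 < ε / 4))] with k hks hkr t ht
  obtain ⟨y, hy, hty⟩ := mem_iUnion₂.1 (hcover ht)
  have hyt : dist y t < ε / 4 := mem_ball'.1 hty
  calc dist (β t) (b k t) ≤ dist (β t) (β y) + dist (β y) (b k y) + dist (b k y) (b k t) :=
        dist_triangle4 _ _ _ _
    _ < ε := by linarith [hβdist t y, dist_comm t y, dist_comm (β y) (b k y), hks y hy, hb k y t]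

lemma setLIntegral_Icc_comp_le_add {Y : Type*} [PseudoEMetricSpace Y] {G : Y → ℝ≥0∞}
    {K e : ℝ≥0∞} (hlip : ∀ x y, G x ≤ G y + K * edist x y) (hbound : ∀ x, G x ≤ K)
    {β γ : ℝ → Y} {l l' : ℝ} (hl : ENNReal.ofReal (l' - l) ≤ e)
    (hβγ : ∀ t ∈ Icc 0 l, edist (β t) (γ t) ≤ e) :
    ∫⁻ t in Icc 0 l', G (β t) ≤
      (∫⁻ t in Icc 0 l, G (γ t)) + K * e * (ENNReal.ofReal l + 1) := by
  have hsub : Icc 0 l' ⊆ Icc 0 l ∪ Icc l l' := fun t ht =>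
    (le_total t l).imp (⟨ht.1, ·⟩) (⟨·, ht.2⟩)
  calc ∫⁻ t in Icc 0 l', G (β t)
      ≤ (∫⁻ t in Icc 0 l, G (β t)) + ∫⁻ t in Icc l l', G (β t) :=
        (lintegral_mono_set hsub).trans (lintegral_union_le _ _ _)
    _ ≤ (∫⁻ t in Icc 0 l, (G (γ t) + K * e)) + ∫⁻ _ in Icc l l', K :=
        add_le_add (setLIntegral_mono' measurableSet_Icc fun t ht =>
          (hlip _ (γ t)).trans (by gcongr; exact hβγ t ht)) (lintegral_mono fun _ => hbound _)
    _ = (∫⁻ t in Icc 0 l, G (γ t)) + K * e * ENNReal.ofReal l + K * ENNReal.ofReal (l' - l) := by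
        rw [lintegral_add_right _ measurable_const, setLIntegral_const, setLIntegral_const,
          Real.volume_Icc, Real.volume_Icc, sub_zero]
    _ ≤ (∫⁻ t in Icc 0 l, G (γ t)) + K * e * (ENNReal.ofReal l + 1) := by
        rw [mul_add, mul_one, ← add_assoc]
        gcongr

lemma len_le_of_add_lintegral_le {α : Type*} {G : α → ℝ≥0∞} (hG : ∀ y, 1 ≤ G y) {γ : ℝ → α}
    {l : ℝ} {a c : ℝ≥0∞} (hc : c ≠ ∞) (h : a + ∫⁻ t in Icc 0 l, G (γ t) ≤ c) : l ≤ c.toReal := by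
  refine (ENNReal.ofReal_le_iff_le_toReal hc).1 ?_
  calc ENNReal.ofReal l = ∫⁻ _ in Icc 0 l, 1 := by simp
    _ ≤ ∫⁻ t in Icc 0 l, G (γ t) := lintegral_mono fun _ => hG _
    _ ≤ c := le_add_self.trans h

lemma lipApprox_cost_le_of_close {Y : Type*} [PseudoEMetricSpace Y] {g f : Y → ℝ≥0∞}
    {m k : ℕ} (hmk : m ≤ k) {β γ : ℝ → Y} (hβ : LipschitzWith 1 β) {l l' : ℝ} {c e : ℝ≥0∞}
    (hl₀ : 0 ≤ l) (hl : edist l' l ≤ e) (hβγ : ∀ t ∈ Icc 0 l, edist (β t) (γ t) ≤ e)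
    (hcost : f (γ l) + ∫⁻ t in Icc 0 l, lipApprox g k (γ t) ≤ c) :
    lipApprox f m (β l') + ∫⁻ t in Icc 0 l', lipApprox g m (β t) ≤
      c + (m + 1) * e * (ENNReal.ofReal l + 3) := by
  have hend : edist (β l') (γ l) ≤ 2 * e := by
    rw [two_mul]
    exact (edist_triangle _ (β l) _).trans
      (add_le_add ((hβ.edist_le_mul l' l).trans (by simpa using hl)) (hβγ l ⟨hl₀, le_rfl⟩))
  have hf : lipApprox f m (β l') ≤ f (γ l) + (m + 1) * (2 * e) :=
    (lipApprox_le_add_edist f m _ (γ l)).trans (by gcongr; exact lipApprox_le f m _)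
  have hlen : ENNReal.ofReal (l' - l) ≤ e := by
    rw [edist_dist] at hl
    exact (ENNReal.ofReal_le_ofReal (le_abs_self _)).trans hl
  have hg : ∫⁻ t in Icc 0 l', lipApprox g m (β t) ≤
      (∫⁻ t in Icc 0 l, lipApprox g k (γ t)) + (m + 1) * e * (ENNReal.ofReal l + 1) :=
    (setLIntegral_Icc_comp_le_add (lipApprox_le_add_edist g m) (lipApprox_le_natCast_add_one g m)
      hlen hβγ).trans (by gcongr; exact lipApprox_mono hmk _)
  calc lipApprox f m (β l') + ∫⁻ t in Icc 0 l', lipApprox g m (β t)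
      ≤ (f (γ l) + (m + 1) * (2 * e)) + ((∫⁻ t in Icc 0 l, lipApprox g k (γ t)) +
          (m + 1) * e * (ENNReal.ofReal l + 1)) := add_le_add hf hg
    _ = f (γ l) + (∫⁻ t in Icc 0 l, lipApprox g k (γ t)) +
          (m + 1) * e * (ENNReal.ofReal l + 3) := by ring
    _ ≤ c + (m + 1) * e * (ENNReal.ofReal l + 3) := by gcongr

variable {Y : Type*} [MetricSpace Y] {g f : Y → ℝ≥0∞} {x : Y} {c : ℝ≥0∞}

lemma curve_cost_le_of_lipApprox_cost_le (hg : LowerSemicontinuous g)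
    (hf : LowerSemicontinuous f) (γ : Curve Y)
    (h : ∀ m, lipApprox f m (γ.toFun γ.len) + γ.integral (lipApprox g m) ≤ c) :
    f (γ.toFun γ.len) + γ.integral g ≤ c := by
  have hint : γ.integral g = ⨆ m, γ.integral (lipApprox g m) := by
    simp only [Curve.integral]
    rw [← lintegral_iSup']
    · simp only [iSup_lipApprox _ hg]
    · exact fun m => (((continuous_lipApprox g m).comp_continuousOn γ.lip.continuousOn).aemeasurable
        measurableSet_Icc)
    · exact ae_of_all _ fun t i j hij => lipApprox_mono hij _
  have hmono : Monotone fun m => γ.integral (lipApprox g m) := fun i j hij =>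
    lintegral_mono fun _ => lipApprox_mono hij _
  rw [hint, ← iSup_lipApprox _ hf,
    ENNReal.iSup_add_iSup_of_monotone (fun i j hij => lipApprox_mono hij _) hmono]
  exact iSup_le h

lemma exists_curve_cost_le_of_coarseCost_lt [ProperSpace Y] (hg : LowerSemicontinuous g)
    (hg1 : ∀ y, 1 ≤ g y) (hf : LowerSemicontinuous f) (hc : c ≠ ∞)
    (h : ∀ k : ℕ, coarseCost (lipApprox g k) f (1 / (k + 1)) x < c) :
    ∃ γ : Curve Y, γ.toFun 0 = x ∧ f (γ.toFun γ.len) + γ.integral g ≤ c := by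
  simp only [coarseCost, iInf_lt_iff] at h
  choose l γ hγ hcost using h
  have hlen : ∀ k, l k ≤ c.toReal := fun k =>
    len_le_of_add_lintegral_le (one_le_lipApprox k · hg1) hc (hcost k).le
  -- The ultrafilter plays the role of the subsequence in the Arzelà–Ascoli theorem.
  set U : Ultrafilter ℕ := hyperfilter ℕ
  have hU : (U : Filter ℕ) ≤ atTop := Nat.cofinite_eq_atTop ▸ hyperfilter_le_cofinite
  obtain ⟨β, hβ, hlim⟩ := exists_lipschitzWith_tendstoUniformlyOn U
    (tendsto_one_div_add_atTop_nhds_zero_nat.mono_left hU) (isCompact_closedBall x c.toReal)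
    (fun k t => closedBall_subset_closedBall (hlen k) ((hγ k).mem_closedBall t))
    (fun k => (hγ k).dist_le)
  obtain ⟨l', hl', hlim'⟩ : ∃ l' ∈ Icc 0 c.toReal, Tendsto l U (𝓝 l') :=
    isCompact_Icc.ultrafilter_le_nhds' (U.map l)
      (Ultrafilter.mem_map.2 (univ_mem' fun k => ⟨(hγ k).len_nonneg, hlen k⟩))
  have hstart : β 0 = x := by
    refine tendsto_nhds_unique ((hlim {0} isCompact_singleton).tendsto_at rfl) ?_
    refine tendsto_const_nhds.congr fun k => dist_le_zero.1 ?_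
    simpa using (hγ k).dist_start_le 0
  refine ⟨⟨l', hl'.1, β, hβ.lipschitzOnWith⟩, hstart,
    curve_cost_le_of_lipApprox_cost_le hg hf _ fun m => ?_⟩
  refine le_of_forall_pos_le_add_mul (C := (m + 1) * (c + 3)) (by finiteness) fun e he => ?_
  have he' : 0 < (e : ℝ≥0∞) := ENNReal.coe_pos.2 he
  have hm : ∀ᶠ k in (U : Filter ℕ), m ≤ k := hU (eventually_ge_atTop m)
  obtain ⟨k, hmk, hkl, hkβ⟩ := (hm.and ((hlim'.eventually (eball_mem_nhds l' he')).and
    (EMetric.tendstoUniformlyOn_iff.1 (hlim (Icc 0 c.toReal) isCompact_Icc) e he'))).exists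
  refine (lipApprox_cost_le_of_close hmk hβ (hγ k).len_nonneg (mem_eball'.1 hkl).le
    (fun t ht => (hkβ t ⟨ht.1, ht.2.trans (hlen k)⟩).le) (hcost k).le).trans ?_
  rw [mul_right_comm]
  gcongr
  exact ENNReal.ofReal_le_of_le_toReal (hlen k)

end CoarseLimit

section CoarsePotential

variable {Y : Type*} [MetricSpace Y]

lemma Curve.derivLE_of_sub_le {h : Y → ℝ} {G : Y → ℝ≥0∞} {r : ℝ} (hr : 0 < r)
    (hG : ∀ x, G x ≠ ∞) (hGr : ∀ x y, dist x y ≤ r → h x - h y ≤ (G x).toReal * dist x y)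
    (γ : Curve Y) : γ.DerivLE h G := by
  rw [Curve.DerivLE, ← restrict_Ioo_eq_restrict_Icc, ae_restrict_iff' measurableSet_Ioo]
  refine Eventually.of_forall fun t ht => ?_
  rw [ENNReal.ofReal_le_iff_le_toReal (hG _)]
  refine abs_deriv_le_of_eventually_sub_le ENNReal.toReal_nonneg ?_
  filter_upwards [Icc_mem_nhds ht.1 ht.2, ball_mem_nhds t hr] with s hs hsr
  have hdist : dist (γ.toFun t) (γ.toFun s) ≤ |s - t| := by
    have hlip := γ.lip.dist_le_mul t (Ioo_subset_Icc_self ht) s hs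
    rwa [NNReal.coe_one, one_mul, dist_comm t s, Real.dist_eq] at hlip
  refine (hGr _ _ (hdist.trans hsr.le)).trans ?_
  gcongr

variable (g f : Y → ℝ≥0∞) (k : ℕ) (x y : Y)

/-- The coarse path cost at scale `1 / (k + 1)`, with running cost `lipApprox g k`, truncated
at `1`. -/
def coarsePotential (g f : Y → ℝ≥0∞) (k : ℕ) (x : Y) : ℝ :=
  (min (coarseCost (lipApprox g k) f (1 / (k + 1)) x) 1).toReal

lemma coarsePotential_nonneg : 0 ≤ coarsePotential g f k x := ENNReal.toReal_nonneg

lemma coarsePotential_le_one : coarsePotential g f k x ≤ 1 :=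
  ENNReal.toReal_le_of_le_ofReal zero_le_one (by simp)

lemma ofReal_coarsePotential_le : ENNReal.ofReal (coarsePotential g f k x) ≤ f x := by
  rw [coarsePotential, ENNReal.ofReal_toReal (by simp)]
  exact (min_le_left _ _).trans (coarseCost_le_self (by positivity))

lemma coarsePotential_mono : Monotone (coarsePotential g f) := fun k m hkm x =>
  ENNReal.toReal_mono (by simp) (min_le_min_right _ (coarseCost_mono (lipApprox_mono hkm)
    (Nat.one_div_le_one_div hkm)))

variable {x y}

lemma coarsePotential_sub_le (hxy : dist x y ≤ 1 / (k + 1)) :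
    coarsePotential g f k x - coarsePotential g f k y ≤ (lipApprox g k x).toReal * dist x y := by
  set c := coarseCost (lipApprox g k) f (1 / (k + 1)) with hc
  have hstep : min (c x) 1 ≤ lipApprox g k x * edist x y + min (c y) 1 := by
    rw [← min_add_add_left]
    exact min_le_min (coarseCost_le_mul_edist_add hxy) le_add_self
  have hne : lipApprox g k x * edist x y ≠ ∞ :=
    ENNReal.mul_ne_top (lipApprox_ne_top g k x) (edist_ne_top x y)
  rw [sub_le_iff_le_add, coarsePotential, coarsePotential, ← hc, dist_edist, ← ENNReal.toReal_mul,
    ← ENNReal.toReal_add hne (by simp)]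
  exact ENNReal.toReal_mono (ENNReal.add_ne_top.2 ⟨hne, by simp⟩) hstep

lemma lipschitzWith_coarsePotential : LipschitzWith (k + 1) (coarsePotential g f k) := by
  refine LipschitzWith.of_le_add_mul _ fun x y => sub_le_iff_le_add'.1 ?_
  push_cast
  rcases le_or_gt (dist x y) (1 / (k + 1)) with hxy | hxy
  · refine (coarsePotential_sub_le g f k hxy).trans ?_
    gcongr
    exact ENNReal.toReal_le_of_le_ofReal (by positivity)
      ((lipApprox_le_natCast_add_one g k x).trans_eq (by
        rw [ENNReal.ofReal_add (by positivity) zero_le_one]; simp))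
  · rw [div_lt_iff₀' (by positivity)] at hxy
    linarith [coarsePotential_le_one g f k x, coarsePotential_nonneg g f k y]

lemma Curve.derivLE_coarsePotential (γ : Curve Y) :
    γ.DerivLE (coarsePotential g f k) (lipApprox g k) :=
  γ.derivLE_of_sub_le (r := 1 / (k + 1)) (by positivity) (lipApprox_ne_top g k)
    fun _ _ => coarsePotential_sub_le g f k

lemma isUpperGradient_coarsePotential [MeasurableSpace Y] [BorelSpace Y] :
    IsUpperGradient (coarsePotential g f k) (lipApprox g k) :=
  ⟨(continuous_lipApprox g k).measurable, fun γ => (γ.derivLE_coarsePotential g f k).ugIneq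
    ((lipschitzWith_coarsePotential g f k).comp_lipschitzOnWith γ.lip)⟩

variable {g f}

lemma exists_curve_cost_le_of_coarsePotential_lt [ProperSpace Y] (hg : LowerSemicontinuous g)
    (hg1 : ∀ y, 1 ≤ g y) (hf : LowerSemicontinuous f) {c : ℝ} (hc : c ≤ 1)
    (h : ∀ k, coarsePotential g f k x < c) :
    ∃ γ : Curve Y, γ.toFun 0 = x ∧ f (γ.toFun γ.len) + γ.integral g ≤ ENNReal.ofReal c := by
  refine exists_curve_cost_le_of_coarseCost_lt hg hg1 hf ENNReal.ofReal_ne_top fun k => ?_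
  exact (min_lt_iff.1 ((ENNReal.lt_ofReal_iff_toReal_lt (by simp)).2 (h k))).resolve_right
    (not_lt.2 (by simpa using hc))

end CoarsePotential

section Average

variable {α : Type*} [MeasurableSpace α] {ν : Measure α} {S T : Set α} {u : α → ℝ}

lemma abs_setAverage_sub_le (hS : ν S ≠ 0) (hS' : ν S ≠ ∞) (hu : IntegrableOn u S ν) (c : ℝ) :
    |(⨍ y in S, u y ∂ν) - c| ≤ ⨍ y in S, |u y - c| ∂ν := by
  have hpos : 0 < ν.real S := ENNReal.toReal_pos hS hS'
  have hsub : (⨍ y in S, u y ∂ν) - c = ⨍ y in S, (u y - c) ∂ν := by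
    rw [setAverage_eq, setAverage_eq, integral_sub hu (integrableOn_const hS'), setIntegral_const,
      smul_sub, smul_smul, inv_mul_cancel₀ hpos.ne', one_smul]
  rw [hsub, setAverage_eq, setAverage_eq, smul_eq_mul, smul_eq_mul, abs_mul,
    abs_of_pos (inv_pos.2 hpos)]
  gcongr
  exact abs_integral_le_integral_abs

lemma setAverage_le_mul_setAverage_of_subset {D : ℝ} (hST : S ⊆ T) (hS : ν S ≠ 0) (hT : ν T ≠ ∞)
    (hD : ν.real T ≤ D * ν.real S) (hu : IntegrableOn u T ν) (hu₀ : 0 ≤ u) :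
    ⨍ y in S, u y ∂ν ≤ D * ⨍ y in T, u y ∂ν := by
  have hposS : 0 < ν.real S := ENNReal.toReal_pos hS (measure_ne_top_of_subset hST hT)
  have hposT : 0 < ν.real T := hposS.trans_le (measureReal_mono hST hT)
  have hS₀ : 0 ≤ ∫ y in S, u y ∂ν := integral_nonneg hu₀
  have hinv : (ν.real S)⁻¹ ≤ D * (ν.real T)⁻¹ := by
    rwa [← div_eq_mul_inv, le_div_iff₀ hposT, inv_mul_le_iff₀ hposS, mul_comm]
  have hT₀ : 0 ≤ D * (ν.real T)⁻¹ := (inv_nonneg.2 hposS.le).trans hinv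
  rw [setAverage_eq, setAverage_eq, smul_eq_mul, smul_eq_mul, ← mul_assoc]
  exact mul_le_mul hinv (setIntegral_mono_set hu (Eventually.of_forall hu₀) hST.eventuallyLE)
    hS₀ hT₀

lemma abs_setAverage_sub_le_mul_setAverage {D : ℝ} (hST : S ⊆ T) (hS : ν S ≠ 0) (hT : ν T ≠ ∞)
    (hD : ν.real T ≤ D * ν.real S) (hu : IntegrableOn u T ν) (c : ℝ) :
    |(⨍ y in S, u y ∂ν) - c| ≤ D * ⨍ y in T, |u y - c| ∂ν :=
  (abs_setAverage_sub_le hS (measure_ne_top_of_subset hST hT) (hu.mono_set hST) c).trans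
    (setAverage_le_mul_setAverage_of_subset hST hS hT hD (hu.sub (integrableOn_const hT)).abs
      fun _ => abs_nonneg _)

end Average

section Maximal

/-- The set where the centred maximal function of `g`, restricted to radii at most `R`, is at
most `m`. -/
def maximalSublevel {Y : Type*} [PseudoMetricSpace Y] [MeasurableSpace Y] (μ : Measure Y)
    (g : Y → ℝ≥0∞) (R : ℝ) (m : ℝ≥0) : Set Y :=
  {x | ∀ r, 0 < r → r ≤ R → ∫⁻ z in ball x r, g z ∂μ ≤ m * μ (ball x r)}

section

variable {Y : Type*} [PseudoMetricSpace Y] [MeasurableSpace Y] {μ : Measure Y} {g g' : Y → ℝ≥0∞}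
  {R R' : ℝ} {m m' : ℝ≥0}

lemma maximalSublevel_subset (hg : g' ≤ g) (hR : R' ≤ R) (hm : m ≤ m') :
    maximalSublevel μ g R m ⊆ maximalSublevel μ g' R' m' := fun _ hx r hr hrR =>
  (lintegral_mono hg).trans ((hx r hr (hrR.trans hR)).trans (by gcongr))

lemma mem_maximalSublevel_add_one {x : Y} (hx : x ∈ maximalSublevel μ g R m) :
    x ∈ maximalSublevel μ (fun z => g z + 1) R (m + 1) := by
  intro r hr hrR
  rw [lintegral_add_right _ measurable_const, setLIntegral_const, one_mul, ENNReal.coe_add,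
    add_mul, ENNReal.coe_one, one_mul]
  gcongr
  exact hx r hr hrR

end

variable {μ : Measure X} {Cd : ℝ} {g : X → ℝ≥0∞}

lemma Doubling.eventually_setLIntegral_closedBall_le [SecondCountableTopology X]
    (hD : Doubling μ Cd) (hg : Measurable g) (hg' : ∫⁻ x, g x ∂μ ≠ ∞) :
    ∀ᵐ x ∂μ, ∀ᶠ r in 𝓝[>] 0,
      ∫⁻ z in closedBall x r, g z ∂μ ≤ (g x + 1) * μ (closedBall x r) := by
  have := hD.isLocallyFiniteMeasure
  have := hD.isUnifLocDoublingMeasure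
  filter_upwards [(IsUnifLocDoublingMeasure.vitaliFamily μ 1).ae_tendsto_lintegral_div
    hg.aemeasurable hg', ae_lt_top hg hg'] with x hx hxtop
  have hballs : Tendsto (fun r : ℝ => closedBall x r) (𝓝[>] 0)
      ((IsUnifLocDoublingMeasure.vitaliFamily μ 1).filterAt x) := by
    refine IsUnifLocDoublingMeasure.tendsto_closedBall_filterAt μ (K := 1) (fun _ => x) id
      tendsto_id ?_
    filter_upwards [self_mem_nhdsWithin] with r (hr : 0 < r)
    simp [hr.le]
  have hlt := (hx.comp hballs).eventually
    (gt_mem_nhds (ENNReal.lt_add_right hxtop.ne one_ne_zero))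
  filter_upwards [hlt, self_mem_nhdsWithin] with r hr (hr₀ : 0 < r)
  refine (ENNReal.div_le_iff ?_ ?_).1 hr.le
  · exact ((hD.measure_ball_pos x hr₀).trans_le (measure_mono ball_subset_closedBall)).ne'
  · exact measure_ne_top_of_subset (closedBall_subset_ball (by linarith : r < 2 * r))
      (hD.measure_ball_lt_top x _).ne

lemma Doubling.ae_exists_mem_maximalSublevel [SecondCountableTopology X] (hD : Doubling μ Cd)
    (hg : Measurable g) (hg' : ∫⁻ x, g x ∂μ ≠ ∞) :
    ∀ᵐ x ∂μ, ∃ n : ℕ, x ∈ maximalSublevel μ g (1 / (n + 1)) n := by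
  filter_upwards [hD.eventually_setLIntegral_closedBall_le hg hg', ae_lt_top hg hg'] with x hx hxtop
  obtain ⟨R, hR : 0 < R, hRx⟩ := mem_nhdsGT_iff_exists_Ioc_subset.1 hx
  have hc : (g x + 1) * ENNReal.ofReal Cd ≠ ∞ :=
    ENNReal.mul_ne_top (by simp [hxtop.ne]) ENNReal.ofReal_ne_top
  obtain ⟨n₁, hn₁⟩ := ENNReal.exists_nat_gt hc
  obtain ⟨n₂, hn₂⟩ := exists_nat_one_div_lt hR
  refine ⟨max n₁ n₂, fun r hr hrn => ?_⟩
  have hrR : r ≤ R := hrn.trans ((Nat.one_div_le_one_div (le_max_right n₁ n₂)).trans hn₂.le)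
  calc ∫⁻ z in ball x r, g z ∂μ ≤ ∫⁻ z in closedBall x r, g z ∂μ :=
        lintegral_mono_set ball_subset_closedBall
    _ ≤ (g x + 1) * μ (closedBall x r) := hRx ⟨hr, hrR⟩
    _ ≤ (g x + 1) * μ (ball x (2 * r)) := by gcongr; exact closedBall_subset_ball (by linarith)
    _ ≤ (g x + 1) * (ENNReal.ofReal Cd * μ (ball x r)) := by gcongr; exact (hD.2 x r hr).2.1
    _ = (g x + 1) * ENNReal.ofReal Cd * μ (ball x r) := (mul_assoc _ _ _).symm
    _ ≤ ((max n₁ n₂ : ℕ) : ℝ≥0) * μ (ball x r) := by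
        gcongr
        rw [ENNReal.coe_natCast]
        exact hn₁.le.trans (by gcongr; exact le_max_left n₁ n₂)

end Maximal

section Poincare

section

variable {Y : Type*} [MetricSpace Y] [MeasurableSpace Y] {μ : Measure Y} {Cd CP lam : ℝ}
  {u : Y → ℝ} {G : Y → ℝ≥0∞} {x : Y} {R : ℝ} {m : ℝ≥0}

lemma Poincare.setAverage_abs_sub_setAverage_le (hP : Poincare μ CP lam)
    (hu : MemL1Loc μ univ u) (hG : IsUpperGradient u G) (hx : x ∈ maximalSublevel μ G R m) {r : ℝ}
    (hr : 0 < r) (hrR : lam * r ≤ R) :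
    ⨍ y in ball x r, |u y - ⨍ z in ball x r, u z ∂μ| ∂μ ≤ CP * r * m := by
  have hCP : 0 < CP := one_pos.trans_le hP.1
  have hlam : 0 < lam := one_pos.trans_le hP.2.1
  have hmax : (∫⁻ y in ball x (lam * r), G y ∂μ) / μ (ball x (lam * r)) ≤ m :=
    ENNReal.div_le_of_le_mul (hx _ (by positivity) hrR)
  have hpoinc := (hP.2.2 x r hr u G hu hG).trans (mul_le_mul_right hmax _)
  rwa [← ENNReal.ofReal_coe_nnreal, ← ENNReal.ofReal_mul (by positivity),
    ENNReal.ofReal_le_ofReal_iff (by positivity)] at hpoinc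

lemma Doubling.measureReal_ball_two_mul_le (hD : Doubling μ Cd) (x : Y) {r : ℝ} (hr : 0 < r) :
    μ.real (ball x (2 * r)) ≤ Cd * μ.real (ball x r) := by
  have hle := ENNReal.toReal_mono
    (ENNReal.mul_ne_top ENNReal.ofReal_ne_top (hD.measure_ball_lt_top x r).ne) (hD.2 x r hr).2.1
  rwa [ENNReal.toReal_mul, ENNReal.toReal_ofReal (zero_le_one.trans hD.1)] at hle

end

variable [ProperSpace X] {μ : Measure X} {Cd CP lam : ℝ} {u w : X → ℝ} {g G : X → ℝ≥0∞} {x y : X}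
  {R : ℝ} {m : ℝ≥0}

lemma Doubling.integrableOn_ball (hD : Doubling μ Cd) (hu : Continuous u) (x : X) (r : ℝ) :
    IntegrableOn u (ball x r) μ := by
  have := hD.isLocallyFiniteMeasure
  exact (hu.continuousOn.integrableOn_compact (isCompact_closedBall x r)).mono_set
    ball_subset_closedBall

lemma Doubling.memL1Loc_univ (hD : Doubling μ Cd) (hu : Continuous u) : MemL1Loc μ univ u :=
  ⟨hu.aemeasurable, fun x _ => ⟨1, one_pos, by
    rw [univ_inter]
    simpa only [← Real.norm_eq_abs, ofReal_norm] using
      hasFiniteIntegral_iff_enorm.1 (hD.integrableOn_ball hu x 1).2⟩⟩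

lemma Doubling.tendsto_setAverage_ball (hD : Doubling μ Cd) (hu : Continuous u) (x : X) :
    Tendsto (fun r => ⨍ z in ball x r, u z ∂μ) (𝓝[>] 0) (𝓝 (u x)) := by
  refine Metric.nhds_basis_closedBall.tendsto_right_iff.2 fun ε hε => ?_
  obtain ⟨δ, hδ, hball⟩ := Metric.continuous_iff.1 hu x ε hε
  filter_upwards [Ioo_mem_nhdsGT hδ] with r hr
  refine (convex_closedBall (u x) ε).set_average_mem isClosed_closedBall
    (hD.measure_ball_pos x hr.1).ne' (hD.measure_ball_lt_top x r).ne ?_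
    (hD.integrableOn_ball hu x r)
  filter_upwards [ae_restrict_mem measurableSet_ball] with z hz
  exact (hball z (lt_trans hz hr.2)).le

/-- A telescoping sum over the balls `ball x (ρ / 2 ^ n)`. -/
lemma abs_setAverage_ball_sub_le (hD : Doubling μ Cd) (hP : Poincare μ CP lam)
    (hu : Continuous u) (hG : IsUpperGradient u G) (hx : x ∈ maximalSublevel μ G R m) {ρ : ℝ}
    (hρ : 0 < ρ) (hρR : lam * ρ ≤ R) :
    |(⨍ z in ball x ρ, u z ∂μ) - u x| ≤ 2 * Cd * CP * ρ * m := by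
  set a : ℕ → ℝ := fun n => ⨍ z in ball x (ρ / 2 ^ n), u z ∂μ with ha
  have hlam : 0 < lam := one_pos.trans_le hP.2.1
  have hCd : 0 < Cd := one_pos.trans_le hD.1
  have hhalf : ∀ n : ℕ, ρ / 2 ^ n = 2 * (ρ / 2 ^ (n + 1)) := fun n => by rw [pow_succ]; field_simp
  have hstep : ∀ n, dist (a n) (a (n + 1)) ≤ 2 * Cd * CP * ρ * m / 2 / 2 ^ n := fun n => by
    have hpos : 0 < ρ / 2 ^ (n + 1) := by positivity
    have hradius : lam * (ρ / 2 ^ n) ≤ R := le_trans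
      (by gcongr; exact div_le_self hρ.le (one_le_pow₀ one_le_two)) hρR
    rw [dist_comm, Real.dist_eq]
    calc |a (n + 1) - a n| ≤ Cd * ⨍ z in ball x (ρ / 2 ^ n), |u z - a n| ∂μ :=
          abs_setAverage_sub_le_mul_setAverage (ball_subset_ball (by rw [hhalf n]; linarith))
            (hD.measure_ball_pos x hpos).ne' (hD.measure_ball_lt_top x _).ne
            (by rw [hhalf n]; exact hD.measureReal_ball_two_mul_le x hpos)
            (hD.integrableOn_ball hu x _) _
      _ ≤ Cd * (CP * (ρ / 2 ^ n) * m) := by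
          gcongr
          exact hP.setAverage_abs_sub_setAverage_le (hD.memL1Loc_univ hu) hG hx (by positivity)
            hradius
      _ = 2 * Cd * CP * ρ * m / 2 / 2 ^ n := by field_simp
  have hradii : Tendsto (fun n : ℕ => ρ / 2 ^ n) atTop (𝓝[>] 0) :=
    tendsto_nhdsWithin_iff.2 ⟨tendsto_const_nhds.div_atTop
      (tendsto_pow_atTop_atTop_of_one_lt one_lt_two), Eventually.of_forall fun n => by
        simp only [mem_Ioi]; positivity⟩
  have hdist := dist_le_of_le_geometric_two_of_tendsto₀ hstep
    ((hD.tendsto_setAverage_ball hu x).comp hradii)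
  simpa only [ha, pow_zero, div_one, Real.dist_eq] using hdist

lemma abs_sub_le_of_mem_maximalSublevel (hD : Doubling μ Cd) (hP : Poincare μ CP lam)
    (hu : Continuous u) (hG : IsUpperGradient u G) (hx : x ∈ maximalSublevel μ G R m)
    (hy : y ∈ maximalSublevel μ G R m) (hR : lam * (2 * dist x y) ≤ R) :
    |u x - u y| ≤ (6 * Cd + 2 * Cd ^ 2) * CP * m * dist x y := by
  rcases eq_or_ne x y with rfl | hxy
  · simp
  have hdist : 0 < dist x y := dist_pos.2 hxy
  have hlam : 0 < lam := one_pos.trans_le hP.2.1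
  have hCd : 0 < Cd := one_pos.trans_le hD.1
  have hatx := abs_setAverage_ball_sub_le hD hP hu hG hx (ρ := 2 * dist x y) (by positivity) hR
  have haty := abs_setAverage_ball_sub_le hD hP hu hG hy hdist
    (le_trans (by gcongr; linarith) hR)
  have hsub : ball y (dist x y) ⊆ ball x (2 * dist x y) :=
    ball_subset_ball' (by rw [dist_comm y x]; linarith)
  have hmeas : μ.real (ball x (2 * dist x y)) ≤ Cd ^ 2 * μ.real (ball y (dist x y)) := by
    calc μ.real (ball x (2 * dist x y)) ≤ μ.real (ball y (2 * (2 * dist x y))) :=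
          measureReal_mono (ball_subset_ball' (by linarith)) (hD.measure_ball_lt_top y _).ne
      _ ≤ Cd * (Cd * μ.real (ball y (dist x y))) :=
          (hD.measureReal_ball_two_mul_le y (by positivity)).trans
            (by gcongr; exact hD.measureReal_ball_two_mul_le y hdist)
      _ = Cd ^ 2 * μ.real (ball y (dist x y)) := by ring
  have hxy' := (abs_setAverage_sub_le_mul_setAverage hsub (hD.measure_ball_pos y hdist).ne'
    (hD.measure_ball_lt_top x _).ne hmeas (hD.integrableOn_ball hu x _)
    (⨍ z in ball x (2 * dist x y), u z ∂μ)).trans (mul_le_mul_of_nonneg_left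
      (hP.setAverage_abs_sub_setAverage_le (hD.memL1Loc_univ hu) hG hx (by positivity) hR)
      (by positivity))
  rw [abs_le] at *
  constructor <;> linarith

/-- Poincaré bounds the potentials with target `y`, hence the cost of reaching `y` from `x`. -/
lemma exists_curve_integral_le_of_mem_maximalSublevel (hD : Doubling μ Cd)
    (hP : Poincare μ CP lam) (hg : LowerSemicontinuous g) (hg1 : ∀ z, 1 ≤ g z)
    (hx : x ∈ maximalSublevel μ g R m) (hy : y ∈ maximalSublevel μ g R m)
    (hR : lam * (2 * dist x y) ≤ R) {c : ℝ} (hc : c ≤ 1)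
    (hdist : (6 * Cd + 2 * Cd ^ 2) * CP * m * dist x y < c) :
    ∃ γ : Curve X, γ.toFun 0 = x ∧ γ.toFun γ.len = y ∧ γ.integral g ≤ ENNReal.ofReal c := by
  set f : X → ℝ≥0∞ := ({y}ᶜ : Set X).indicator fun _ => ∞ with hf
  have hpot : ∀ k, coarsePotential g f k x < c := fun k => by
    have hfy : ENNReal.ofReal (coarsePotential g f k y) ≤ 0 :=
      (ofReal_coarsePotential_le g f k y).trans_eq (by simp [hf])
    have hy₀ : coarsePotential g f k y ≤ 0 := by simpa using hfy
    have hsub := abs_sub_le_of_mem_maximalSublevel hD hP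
      (lipschitzWith_coarsePotential g f k).continuous (isUpperGradient_coarsePotential g f k)
      (maximalSublevel_subset (lipApprox_le g k) le_rfl le_rfl hx)
      (maximalSublevel_subset (lipApprox_le g k) le_rfl le_rfl hy) hR
    linarith [le_abs_self (coarsePotential g f k x - coarsePotential g f k y)]
  obtain ⟨γ, hstart, hcost⟩ := exists_curve_cost_le_of_coarsePotential_lt hg hg1
    (isOpen_compl_singleton.lowerSemicontinuous_indicator zero_le) hc hpot
  refine ⟨γ, hstart, ?_, le_add_self.trans hcost⟩
  by_contra hne
  rw [indicator_of_mem (mem_compl_singleton_iff.2 hne), top_add, top_le_iff] at hcost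
  exact ENNReal.ofReal_ne_top hcost

lemma exists_lipschitzOnWith_maximalSublevel (hD : Doubling μ Cd) (hP : Poincare μ CP lam)
    (hw : ∀ x y, |w x - w y| ≤ 1) (hg : LowerSemicontinuous g) (hug : ∀ γ : Curve X, UGIneq w g γ)
    (hR : 0 < R) (m : ℝ≥0) : ∃ L : ℝ≥0, LipschitzOnWith L w (maximalSublevel μ g R m) := by
  have hCP : 0 < CP := one_pos.trans_le hP.1
  have hlam : 0 < lam := one_pos.trans_le hP.2.1
  have hCd : 0 < Cd := one_pos.trans_le hD.1
  set C : ℝ := (6 * Cd + 2 * Cd ^ 2) * CP * (m + 1 : ℝ≥0)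
  have hC₀ : 0 ≤ C := by positivity
  refine ⟨(C + 2 * lam / R).toNNReal, LipschitzOnWith.of_dist_le_mul fun x hx y hy => ?_⟩
  rw [Real.dist_eq, Real.coe_toNNReal _ (add_nonneg hC₀ (by positivity)), add_mul]
  have hC_dist : 0 ≤ C * dist x y := mul_nonneg hC₀ dist_nonneg
  have hR_dist : 0 ≤ 2 * lam / R * dist x y := by positivity
  rcases lt_or_ge R (lam * (2 * dist x y)) with hfar | hnear
  · have hone : 1 ≤ 2 * lam / R * dist x y := by
      rw [div_mul_eq_mul_div, le_div_iff₀ hR]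
      linarith
    linarith [hw x y]
  refine (le_of_forall_gt_imp_ge_of_dense fun c hc => ?_).trans (le_add_of_nonneg_right hR_dist)
  rcases lt_or_ge 1 c with hc1 | hc1
  · exact (hw x y).trans hc1.le
  obtain ⟨γ, rfl, rfl, hγ⟩ := exists_curve_integral_le_of_mem_maximalSublevel hD hP
    (hg.add lowerSemicontinuous_const) (fun _ => le_add_self) (mem_maximalSublevel_add_one hx)
    (mem_maximalSublevel_add_one hy) hnear hc1 hc
  have hle : ENNReal.ofReal |w (γ.toFun 0) - w (γ.toFun γ.len)| ≤ ENNReal.ofReal c :=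
    (hug γ).trans ((lintegral_mono fun _ => le_self_add).trans hγ)
  exact (ENNReal.ofReal_le_ofReal_iff (hC_dist.trans hc.le)).1 hle

lemma aemeasurable_of_forall_ugIneq (hD : Doubling μ Cd) (hP : Poincare μ CP lam)
    (hw : ∀ x y, |w x - w y| ≤ 1) (hg : LowerSemicontinuous g) (hg' : ∫⁻ x, g x ∂μ ≠ ∞)
    (hug : ∀ γ : Curve X, UGIneq w g γ) : AEMeasurable w μ := by
  choose L hL using fun n : ℕ => exists_lipschitzOnWith_maximalSublevel hD hP hw hg hug
    (R := 1 / (n + 1)) (by positivity) n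
  choose e he hew using fun n => (hL n).extend_real
  refine aemeasurable_of_tendsto_metrizable_ae atTop (fun n => (he n).continuous.aemeasurable) ?_
  filter_upwards [hD.ae_exists_mem_maximalSublevel hg.measurable hg'] with x ⟨m, hm⟩
  refine tendsto_const_nhds.congr' ?_
  filter_upwards [eventually_ge_atTop m] with n hn
  exact hew n (maximalSublevel_subset le_rfl (Nat.one_div_le_one_div hn) (Nat.cast_le.2 hn) hm)

end Poincare

section Clamp

/-- The point of `[a, b]` nearest to `t`, for `a ≤ b`. -/
def clamp (a b t : ℝ) : ℝ := max a (min b t)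

variable {a b : ℝ}

lemma le_clamp (a b t : ℝ) : a ≤ clamp a b t := le_max_left _ _

lemma clamp_le (hab : a ≤ b) (t : ℝ) : clamp a b t ≤ b := max_le hab (min_le_left _ _)

lemma clamp_eq_left {t : ℝ} (h : t ≤ a) : clamp a b t = a :=
  max_eq_left ((min_le_right _ _).trans h)

lemma clamp_eq_right {t : ℝ} (hab : a ≤ b) (h : b ≤ t) : clamp a b t = b := by
  rw [clamp, min_eq_left h, max_eq_right hab]

lemma monotone_clamp (a b : ℝ) : Monotone (clamp a b) :=
  monotone_const.max (monotone_const.min monotone_id)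

lemma lipschitzWith_clamp (a b : ℝ) : LipschitzWith 1 (clamp a b) :=
  (LipschitzWith.id.const_min b).const_max a

lemma abs_clamp_sub_clamp_le (a b s t : ℝ) : |clamp a b s - clamp a b t| ≤ |s - t| := by
  simpa [Real.dist_eq] using (lipschitzWith_clamp a b).dist_le_mul s t

end Clamp

section Cutoff

section

variable {Y : Type*} [MetricSpace Y] {g f : Y → ℝ≥0∞}

/-- The Lipschitz cutoff that rises from `0` to `1` as `coarsePotential g f k` goes from `1 / 2`
to `3 / 4`. -/
def cutoff (g f : Y → ℝ≥0∞) (k : ℕ) (x : Y) : ℝ := clamp 0 1 (4 * coarsePotential g f k x - 2)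

/-- The bound for the derivative of `cutoff g f k` along curves that comes from
`coarsePotential_sub_le`. -/
def cutoffGradient (g f : Y → ℝ≥0∞) (k : ℕ) : Y → ℝ≥0∞ :=
  {x | 1 / 2 < coarsePotential g f k x}.indicator fun x => 4 * lipApprox g k x

lemma isOpen_lt_coarsePotential (g f : Y → ℝ≥0∞) (k : ℕ) (c : ℝ) :
    IsOpen {x | c < coarsePotential g f k x} :=
  isOpen_lt continuous_const (lipschitzWith_coarsePotential g f k).continuous

lemma cutoff_eq_zero {k : ℕ} {x : Y} (hx : coarsePotential g f k x ≤ 1 / 2) :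
    cutoff g f k x = 0 := clamp_eq_left (by linarith)

lemma cutoffGradient_ne_top (g f : Y → ℝ≥0∞) (k : ℕ) (x : Y) : cutoffGradient g f k x ≠ ∞ :=
  ne_top_of_le_ne_top (ENNReal.mul_ne_top ENNReal.ofNat_ne_top (lipApprox_ne_top g k x))
    (indicator_le_self _ _ x)

lemma cutoff_sub_le (g f : Y → ℝ≥0∞) (k : ℕ) {x y : Y} (hxy : dist x y ≤ 1 / (k + 1)) :
    cutoff g f k x - cutoff g f k y ≤ (cutoffGradient g f k x).toReal * dist x y := by
  rcases le_or_gt (coarsePotential g f k x) (1 / 2) with hx | hx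
  · rw [cutoff_eq_zero hx]
    have hy : 0 ≤ cutoff g f k y := le_clamp 0 1 _
    have := mul_nonneg (cutoffGradient g f k x).toReal_nonneg (dist_nonneg (x := x) (y := y))
    linarith
  rw [cutoffGradient, indicator_of_mem (by exact hx), ENNReal.toReal_mul, ENNReal.toReal_ofNat]
  have hstep := coarsePotential_sub_le g f k hxy
  have hprod : 0 ≤ (lipApprox g k x).toReal * dist x y := by positivity
  rcases le_total (coarsePotential g f k x) (coarsePotential g f k y) with hle | hle
  · have : cutoff g f k x ≤ cutoff g f k y := monotone_clamp 0 1 (by linarith)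
    linarith
  · have hclamp := (le_abs_self _).trans (abs_clamp_sub_clamp_le 0 1
      (4 * coarsePotential g f k x - 2) (4 * coarsePotential g f k y - 2))
    rw [abs_of_nonneg (by linarith)] at hclamp
    simp only [cutoff]
    linarith

lemma exists_lt_coarsePotential_of_one_le_cost [ProperSpace Y] (hg : LowerSemicontinuous g)
    (hg1 : ∀ z, 1 ≤ g z) (hf : LowerSemicontinuous f) {x : Y}
    (hx : ∀ γ : Curve Y, γ.toFun 0 = x → 1 ≤ f (γ.toFun γ.len) + γ.integral g) {c : ℝ}
    (hc : c < 1) : ∃ k, c < coarsePotential g f k x := by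
  by_contra! hle
  obtain ⟨b, hcb, hb⟩ := exists_between hc
  obtain ⟨γ, hstart, hcost⟩ := exists_curve_cost_le_of_coarsePotential_lt hg hg1 hf hb.le
    fun k => (hle k).trans_lt hcb
  have hone : 1 ≤ ENNReal.ofReal b := (hx γ hstart).trans hcost
  exact hb.not_ge (ENNReal.one_le_ofReal.1 hone)

end

/-- A Lipschitz function with values in `[0, 1]` that equals `1` on the open set `W` and whose
derivative along every curve is controlled by the Borel function `G`. -/
structure IsLipschitzCutoff (W : Set X) (h : X → ℝ) (G : X → ℝ≥0∞) : Prop where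
  isOpen : IsOpen W
  lipschitz : ∃ K, LipschitzWith K h
  nonneg : ∀ x, 0 ≤ h x
  le_one : ∀ x, h x ≤ 1
  eq_one : ∀ x ∈ W, h x = 1
  measurable_gradient : Measurable G
  derivLE : ∀ γ : Curve X, γ.DerivLE h G

variable {μ : Measure X} {g f : X → ℝ≥0∞}

lemma isLipschitzCutoff_cutoff (g f : X → ℝ≥0∞) (k : ℕ) :
    IsLipschitzCutoff {x | 3 / 4 < coarsePotential g f k x} (cutoff g f k)
      (cutoffGradient g f k) where
  isOpen := isOpen_lt_coarsePotential g f k _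
  lipschitz := ⟨_, (lipschitzWith_clamp 0 1).comp
    (((lipschitzWith_smul (4 : ℝ)).comp (lipschitzWith_coarsePotential g f k)).sub
      (LipschitzWith.const 2))⟩
  nonneg _ := le_clamp 0 1 _
  le_one _ := clamp_le zero_le_one _
  eq_one x hx := by
    have hx : 3 / 4 < coarsePotential g f k x := hx
    exact clamp_eq_right zero_le_one (by linarith)
  measurable_gradient := ((continuous_lipApprox g k).measurable.const_mul 4).indicator
    (isOpen_lt_coarsePotential g f k _).measurableSet
  derivLE := Curve.derivLE_of_sub_le (r := 1 / (k + 1)) (by positivity)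
    (cutoffGradient_ne_top g f k) fun x y => cutoff_sub_le g f k

lemma measure_half_lt_coarsePotential_le (hf : LowerSemicontinuous f) (k : ℕ) :
    μ {x | 1 / 2 < coarsePotential g f k x} ≤ 2 * ∫⁻ x, f x ∂μ := by
  have hsub : {x | 1 / 2 < coarsePotential g f k x} ⊆ {x | 2⁻¹ ≤ f x} := fun x hx => by
    refine le_trans ?_ (ofReal_coarsePotential_le g f k x)
    rw [← ENNReal.ofReal_ofNat 2, ← ENNReal.ofReal_inv_of_pos two_pos, ← one_div]
    exact ENNReal.ofReal_le_ofReal (le_of_lt hx)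
  refine (measure_mono hsub).trans ?_
  have hmarkov := meas_ge_le_lintegral_div (μ := μ) hf.measurable.aemeasurable
    (ε := 2⁻¹) (by simp) (by simp)
  rwa [ENNReal.div_eq_inv_mul, inv_inv] at hmarkov

lemma lintegral_cutoff_le (hf : LowerSemicontinuous f) (k : ℕ) :
    ∫⁻ x, ENNReal.ofReal (cutoff g f k x) ∂μ ≤ 2 * ∫⁻ x, f x ∂μ := by
  refine le_trans ?_ (measure_half_lt_coarsePotential_le (g := g) hf k)
  rw [← lintegral_indicator_one (isOpen_lt_coarsePotential g f k _).measurableSet]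
  refine lintegral_mono fun x => ?_
  rcases le_or_gt (coarsePotential g f k x) (1 / 2) with hx | hx
  · simp [cutoff_eq_zero hx]
  · rw [indicator_of_mem (by exact hx)]
    exact ENNReal.ofReal_le_one.2 (clamp_le zero_le_one _)

lemma lintegral_cutoffGradient_add_one_le (hg : LowerSemicontinuous g)
    (hf : LowerSemicontinuous f) (k : ℕ) :
    ∫⁻ x, cutoffGradient (fun z => g z + 1) f k x ∂μ ≤
      4 * ∫⁻ x, g x ∂μ + 8 * ∫⁻ x, f x ∂μ := by
  set S : Set X := {x | 1 / 2 < coarsePotential (fun z => g z + 1) f k x}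
  calc ∫⁻ x, cutoffGradient (fun z => g z + 1) f k x ∂μ
      = ∫⁻ x in S, 4 * lipApprox (fun z => g z + 1) k x ∂μ :=
        lintegral_indicator (isOpen_lt_coarsePotential _ f k _).measurableSet _
    _ ≤ ∫⁻ x in S, 4 * (g x + 1) ∂μ := by gcongr with x; exact lipApprox_le _ k x
    _ = 4 * (∫⁻ x in S, g x ∂μ + μ S) := by
        rw [lintegral_const_mul _ (hg.measurable.add_const 1),
          lintegral_add_right _ measurable_const, setLIntegral_const, one_mul]
    _ ≤ 4 * (∫⁻ x, g x ∂μ + 2 * ∫⁻ x, f x ∂μ) := by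
        gcongr
        · exact Measure.restrict_le_self
        · exact measure_half_lt_coarsePotential_le hf k
    _ = 4 * ∫⁻ x, g x ∂μ + 8 * ∫⁻ x, f x ∂μ := by ring

end Cutoff

section Capacity

section

variable {α : Type*} [MeasurableSpace α] {μ : Measure α} {g : α → ℝ≥0∞}

lemma exists_measurable_ge_ae_eq (hg : AEMeasurable g μ) :
    ∃ g', Measurable g' ∧ g ≤ g' ∧ g' =ᵐ[μ] g := by
  classical
  obtain ⟨N, hsub, hN, hμN⟩ := exists_measurable_superset_of_null hg.ae_eq_mk
  refine ⟨N.piecewise (fun _ => ∞) (hg.mk g), measurable_const.piecewise hN hg.measurable_mk,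
    fun x => ?_, ?_⟩
  · by_cases hx : x ∈ N
    · simp [hx]
    · rw [piecewise_eq_of_notMem _ _ _ hx]
      exact (not_not.1 fun hne => hx (hsub hne)).le
  · filter_upwards [hg.ae_eq_mk, measure_eq_zero_iff_ae_notMem.1 hμN] with x hx hxN
    rw [piecewise_eq_of_notMem _ _ _ hxN, hx]

end

variable {μ : Measure X} {u : X → ℝ} {g : X → ℝ≥0∞} {A : Set X} {δ : ℝ≥0∞}

lemma IsWeakUpperGradientOn.exists_lowerSemicontinuous_forall_ugIneq [μ.WeaklyRegular]
    (h : IsWeakUpperGradientOn μ u g univ) (hδ : ∫⁻ x, g x ∂μ < δ) :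
    ∃ g', LowerSemicontinuous g' ∧ ∫⁻ x, g' x ∂μ < δ ∧ ∀ γ, UGIneq u g' γ := by
  obtain ⟨hg, ρ, hρ, hρi, hρΓ⟩ := h
  obtain ⟨g₀, hg₀, hgg₀, hg₀g⟩ := exists_measurable_ge_ae_eq hg
  obtain ⟨r, hr, hrδ⟩ := ENNReal.lt_iff_exists_add_pos_lt.1 hδ
  have hr₂ : (r : ℝ≥0∞) / 2 ≠ 0 := by simp [hr.ne']
  obtain ⟨c, hc, hcρ⟩ := ENNReal.exists_nnreal_pos_mul_lt hρi.ne hr₂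
  obtain ⟨g', hle, hg', hint⟩ := exists_le_lowerSemicontinuous_lintegral_ge μ
    (fun x => g₀ x + c * ρ x) (hg₀.add (hρ.const_mul _)) hr₂
  refine ⟨g', hg', ?_, fun γ => ?_⟩
  · calc ∫⁻ x, g' x ∂μ ≤ ∫⁻ x, g x ∂μ + c * ∫⁻ x, ρ x ∂μ + r / 2 := by
          rwa [lintegral_add_left hg₀, lintegral_const_mul _ hρ, lintegral_congr_ae hg₀g] at hint
      _ ≤ ∫⁻ x, g x ∂μ + r / 2 + r / 2 := by gcongr
      _ = ∫⁻ x, g x ∂μ + r := by rw [add_assoc, ENNReal.add_halves]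
      _ < δ := hrδ
  by_cases hγ : UGIneq u g γ
  · exact hγ.trans (lintegral_mono fun t => (hgg₀ _).trans (le_self_add.trans (hle _)))
  have htop : ∞ ≤ γ.integral g' := calc
    ∞ = c * γ.integral ρ := by
        rw [hρΓ γ ⟨fun _ _ => mem_univ _, hγ⟩, ENNReal.mul_top (by simpa using hc.ne')]
    _ = ∫⁻ t in Icc 0 γ.len, c * ρ (γ.toFun t) :=
        (lintegral_const_mul' _ _ ENNReal.coe_ne_top).symm
    _ ≤ γ.integral g' := lintegral_mono fun t => le_add_self.trans (hle _)
  exact le_top.trans htop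

lemma exists_lowerSemicontinuous_of_capa1_lt [ProperSpace X] {Cd CP lam : ℝ} (hD : Doubling μ Cd)
    (hP : Poincare μ CP lam) (hA : capa1 μ A < δ) :
    ∃ g f : X → ℝ≥0∞, LowerSemicontinuous g ∧ LowerSemicontinuous f ∧ ∫⁻ x, g x ∂μ < δ ∧
      ∫⁻ x, f x ∂μ < δ ∧
      ∀ γ : Curve X, γ.toFun 0 ∈ A → 1 ≤ f (γ.toFun γ.len) + γ.integral g := by
  have := hD.isLocallyFiniteMeasure
  simp only [capa1, NNorm, iInf_lt_iff, ENNReal.add_iInf, Measure.restrict_univ] at hA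
  obtain ⟨u, -, huA, g₀, hg₀, hlt⟩ := hA
  obtain ⟨g, hg, hgδ, hug⟩ :=
    hg₀.exists_lowerSemicontinuous_forall_ugIneq (lt_of_le_of_lt le_add_self hlt)
  let w : X → ℝ := fun x => clamp 0 1 (u x)
  have hw₀ : ∀ x, 0 ≤ w x := fun x => le_clamp 0 1 _
  have hw₁ : ∀ x, w x ≤ 1 := fun x => clamp_le zero_le_one _
  have hwg : ∀ γ, UGIneq w g γ := fun γ =>
    (ENNReal.ofReal_le_ofReal (abs_clamp_sub_clamp_le 0 1 _ _)).trans (hug γ)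
  have hw : AEMeasurable w μ := aemeasurable_of_forall_ugIneq hD hP
    (fun x y => abs_sub_le_of_nonneg_of_le (hw₀ x) (hw₁ x) (hw₀ y) (hw₁ y)) hg hgδ.ne_top hwg
  have hwδ : ∫⁻ x, ((w x).toNNReal : ℝ≥0∞) ∂μ < δ := by
    refine lt_of_le_of_lt (lintegral_mono fun x => ENNReal.ofReal_le_ofReal ?_)
      (lt_of_le_of_lt le_self_add hlt)
    exact max_le (abs_nonneg _) ((min_le_right _ _).trans (le_abs_self _))
  obtain ⟨s, hs, hsδ⟩ := ENNReal.lt_iff_exists_add_pos_lt.1 hwδ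
  obtain ⟨f, hwf, hf, hfint⟩ := exists_lt_lowerSemicontinuous_lintegral_ge_of_aemeasurable μ
    (fun x => (w x).toNNReal) hw.real_toNNReal (ε := s) (by simpa using hs.ne')
  refine ⟨g, f, hg, hf, hgδ, hfint.trans_lt hsδ, fun γ hγ => ?_⟩
  have hstart : w (γ.toFun 0) = 1 := clamp_eq_right zero_le_one (huA _ hγ)
  calc (1 : ℝ≥0∞) = ENNReal.ofReal (w (γ.toFun γ.len) + (w (γ.toFun 0) - w (γ.toFun γ.len))) := by
        rw [add_sub_cancel, hstart, ENNReal.ofReal_one]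
    _ ≤ ENNReal.ofReal (w (γ.toFun γ.len)) + ENNReal.ofReal |w (γ.toFun 0) - w (γ.toFun γ.len)| :=
        ENNReal.ofReal_add_le.trans (by gcongr; exact le_abs_self _)
    _ ≤ f (γ.toFun γ.len) + γ.integral g := add_le_add (hwf _).le (hwg γ)

lemma exists_isLipschitzCutoff_of_capa1_lt [ProperSpace X] {Cd CP lam : ℝ} (hD : Doubling μ Cd)
    (hP : Poincare μ CP lam) (hA : capa1 μ A < δ) :
    ∃ (W : ℕ → Set X) (h : ℕ → X → ℝ) (G : ℕ → X → ℝ≥0∞),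
      (∀ k, IsLipschitzCutoff (W k) (h k) (G k)) ∧ Monotone W ∧ A ⊆ ⋃ k, W k ∧
      (∀ k, ∫⁻ x, ENNReal.ofReal (h k x) ∂μ ≤ 2 * δ) ∧ ∀ k, ∫⁻ x, G k x ∂μ ≤ 12 * δ := by
  obtain ⟨g, f, hg, hf, hgδ, hfδ, hcost⟩ := exists_lowerSemicontinuous_of_capa1_lt hD hP hA
  refine ⟨fun k => {x | 3 / 4 < coarsePotential (fun z => g z + 1) f k x}, _, _,
    isLipschitzCutoff_cutoff _ f, fun k m hkm x hx => ?_, fun x hx => ?_, fun k => ?_, fun k => ?_⟩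
  · exact lt_of_lt_of_le hx (coarsePotential_mono _ f hkm x)
  · refine mem_iUnion.2 (exists_lt_coarsePotential_of_one_le_cost
      (hg.add lowerSemicontinuous_const) (fun _ => le_add_self) hf (fun γ hγ => ?_) (by norm_num))
    refine (hcost γ (hγ ▸ hx)).trans ?_
    gcongr
    exact lintegral_mono fun _ => le_self_add
  · exact (lintegral_cutoff_le hf k).trans (by gcongr)
  · calc _ ≤ 4 * ∫⁻ x, g x ∂μ + 8 * ∫⁻ x, f x ∂μ := lintegral_cutoffGradient_add_one_le hg hf k
      _ ≤ 4 * δ + 8 * δ := by gcongr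
      _ = 12 * δ := by ring

end Capacity

section TotalVariation

lemma LocLipOn.mono {Y : Type*} [MetricSpace Y] {v : Y → ℝ} {Ω O : Set Y} (h : LocLipOn v Ω)
    (hO : O ⊆ Ω) : LocLipOn v O := fun x hx =>
  let ⟨r, hr, K, hK⟩ := h x (hO hx)
  ⟨r, hr, K, hK.mono (inter_subset_inter_left _ hO)⟩

section

variable {Y : Type*} [MetricSpace Y] [MeasurableSpace Y] {μ : Measure Y} {u v : Y → ℝ}
  {g g' : Y → ℝ≥0∞} {Ω O : Set Y}

lemma IsWeakUpperGradientOn.mono (h : IsWeakUpperGradientOn μ v g Ω) (hO : O ⊆ Ω) :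
    IsWeakUpperGradientOn μ v g O :=
  ⟨h.1, h.2.mono fun _ hγ => ⟨fun t ht => hO (hγ.1 t ht), hγ.2⟩⟩

lemma L1LocConv.mono {v : ℕ → Y → ℝ} (h : L1LocConv μ Ω v u) (hO : O ⊆ Ω) :
    L1LocConv μ O v u := fun x hx =>
  let ⟨r, hr, hlim⟩ := h x (hO hx)
  ⟨r, hr, tendsto_of_tendsto_of_tendsto_of_le_of_le tendsto_const_nhds hlim (fun _ => zero_le)
    fun _ => lintegral_mono_set (inter_subset_inter_left _ hO)⟩

lemma LIntegrableLocOn.of_setLIntegral_ne_top (h : ∫⁻ x in Ω, g x ∂μ ≠ ∞) :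
    LIntegrableLocOn μ g Ω := fun _ _ =>
  ⟨1, one_pos, (lintegral_mono_set inter_subset_left).trans_lt h.lt_top⟩

lemma IsMinimalWUG.setLIntegral_le (hg : IsMinimalWUG μ v g Ω)
    (hg' : IsWeakUpperGradientOn μ v g' Ω) : ∫⁻ x in Ω, g x ∂μ ≤ ∫⁻ x in Ω, g' x ∂μ := by
  by_cases h : ∫⁻ x in Ω, g' x ∂μ = ∞
  · exact h ▸ le_top
  · exact lintegral_mono_ae (hg.2 g' hg' (LIntegrableLocOn.of_setLIntegral_ne_top h))

lemma tv_le_tvOpen {A : Set Y} (hO : IsOpen O) (hA : A ⊆ O) : tv μ A u ≤ tvOpen μ O u :=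
  (iInf₂_le O hO).trans (iInf_le _ hA)

lemma exists_seq_of_tvOpen_lt {T : ℝ≥0∞} (h : tvOpen μ Ω u < T) :
    ∃ (v : ℕ → Y → ℝ) (g : ℕ → Y → ℝ≥0∞), (∀ i, LocLipOn (v i) Ω) ∧
      (∀ i, IsWeakUpperGradientOn μ (v i) (g i) Ω) ∧ L1LocConv μ Ω v u ∧
      ∃ᶠ i in atTop, ∫⁻ x in Ω, g i x ∂μ < T := by
  simp only [tvOpen, iInf_lt_iff] at h
  obtain ⟨v, g, hv, hg, hL, hlim⟩ := h
  exact ⟨v, g, hv, fun i => (hg i).1, hL, frequently_lt_of_liminf_lt (by isBoundedDefault) hlim⟩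

end

variable {μ : Measure X} {u : X → ℝ} {Ω O : Set X} {v : ℕ → X → ℝ} {g : ℕ → X → ℝ≥0∞}

lemma tvOpen_le_liminf [SecondCountableTopology X] [SigmaFinite μ] (hΩ : MeasurableSet Ω)
    (hv : ∀ i, LocLipOn (v i) Ω) (hg : ∀ i, IsWeakUpperGradientOn μ (v i) (g i) Ω)
    (hL : L1LocConv μ Ω v u) : tvOpen μ Ω u ≤ liminf (fun i => ∫⁻ x in Ω, g i x ∂μ) atTop := by
  choose g' hg' using fun i => (hv i).exists_isMinimalWUG (μ := μ) hΩ
  calc tvOpen μ Ω u ≤ liminf (fun i => ∫⁻ x in Ω, g' i x ∂μ) atTop :=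
        (iInf₂_le v g').trans ((iInf₂_le hv hg').trans (iInf_le _ hL))
    _ ≤ liminf (fun i => ∫⁻ x in Ω, g i x ∂μ) atTop :=
        liminf_le_liminf (Eventually.of_forall fun i => (hg' i).setLIntegral_le (hg i))

lemma eventually_lt_setLIntegral_of_lt_tvOpen [SecondCountableTopology X] [SigmaFinite μ]
    (hO : MeasurableSet O) (hOΩ : O ⊆ Ω) (hv : ∀ i, LocLipOn (v i) Ω)
    (hg : ∀ i, IsWeakUpperGradientOn μ (v i) (g i) Ω) (hL : L1LocConv μ Ω v u) {a : ℝ≥0∞}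
    (ha : a < tvOpen μ O u) : ∀ᶠ i in atTop, a < ∫⁻ x in O, g i x ∂μ :=
  eventually_lt_of_lt_liminf (ha.trans_le (tvOpen_le_liminf hO (fun i => (hv i).mono hOΩ)
    (fun i => (hg i).mono hOΩ) (hL.mono hOΩ)))

end TotalVariation

section Excision

/-- The truncation of `v` to `[-M, M]`, multiplied by `1 - h`; for a cutoff function `h` this
removes the truncated `v` from the set where `h = 1`. -/
def excise {α : Type*} (M : ℝ) (h v : α → ℝ) (x : α) : ℝ := clamp (-M) M (v x) * (1 - h x)

lemma abs_clamp_neg_le {M : ℝ} (hM : 0 ≤ M) (t : ℝ) : |clamp (-M) M t| ≤ M :=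
  abs_le.2 ⟨le_clamp _ _ t, clamp_le (by linarith) t⟩

lemma abs_clamp_neg_sub_self_le {M : ℝ} (hM : 0 ≤ M) (t : ℝ) :
    |clamp (-M) M t - t| ≤ max 0 (|t| - M) := by
  rcases le_total M t with h | h
  · rw [clamp_eq_right (by linarith) h, abs_sub_comm, abs_of_nonneg (by linarith),
      abs_of_nonneg (hM.trans h)]
    exact le_max_right _ _
  rcases le_total (-M) t with h' | h'
  · rw [clamp, min_eq_right h, max_eq_right h', sub_self, abs_zero]
    exact le_max_left _ _
  · rw [clamp_eq_left h', abs_of_nonneg (by linarith), abs_of_nonpos (by linarith)]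
    exact le_max_of_le_right (by linarith)

section

variable {α : Type*} {M : ℝ} {h v : α → ℝ} {x : α}

lemma abs_excise_sub_excise_le (hM : 0 ≤ M) (h₀ : 0 ≤ h x) (h₁ : h x ≤ 1) (y : α) :
    |excise M h v x - excise M h v y| ≤ |v x - v y| + M * |h x - h y| := by
  have hsplit : excise M h v x - excise M h v y =
      (clamp (-M) M (v x) - clamp (-M) M (v y)) * (1 - h x) +
        clamp (-M) M (v y) * (h y - h x) := by
    simp only [excise]
    ring
  rw [hsplit]
  refine (abs_add_le _ _).trans (add_le_add ?_ ?_)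
  · rw [abs_mul, abs_of_nonneg (sub_nonneg.2 h₁)]
    exact (mul_le_of_le_one_right (abs_nonneg _) (by linarith)).trans
      (abs_clamp_sub_clamp_le _ _ _ _)
  · rw [abs_mul, abs_sub_comm (h y)]
    exact mul_le_mul_of_nonneg_right (abs_clamp_neg_le hM _) (abs_nonneg _)

lemma abs_excise_sub_le (hM : 0 ≤ M) (h₀ : 0 ≤ h x) (t : ℝ) :
    |excise M h v x - t| ≤ |v x - t| + M * h x + max 0 (|t| - M) := by
  have hsplit : excise M h v x - t = (clamp (-M) M (v x) - clamp (-M) M t) +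
      -(clamp (-M) M (v x) * h x) + (clamp (-M) M t - t) := by
    simp only [excise]
    ring
  rw [hsplit]
  refine (abs_add_three _ _ _).trans ?_
  rw [abs_neg, abs_mul, abs_of_nonneg h₀]
  exact add_le_add_three (abs_clamp_sub_clamp_le _ _ _ _)
    (mul_le_mul_of_nonneg_right (abs_clamp_neg_le hM _) h₀) (abs_clamp_neg_sub_self_le hM t)

end

section

variable {Y : Type*} [MetricSpace Y] [MeasurableSpace Y] {W Ω : Set Y} {h v : Y → ℝ}
  {G g : Y → ℝ≥0∞} {M : ℝ}

lemma IsLipschitzCutoff.locLipOn_excise (hh : IsLipschitzCutoff W h G) (hM : 0 ≤ M)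
    (hv : LocLipOn v Ω) : LocLipOn (excise M h v) Ω := fun x hx => by
  obtain ⟨K, hK⟩ := hh.lipschitz
  obtain ⟨r, hr, L, hL⟩ := hv x hx
  refine ⟨r, hr, L + M.toNNReal * K, LipschitzOnWith.of_dist_le_mul fun y hy z hz => ?_⟩
  calc |excise M h v y - excise M h v z| ≤ |v y - v z| + M * |h y - h z| :=
        abs_excise_sub_excise_le hM (hh.nonneg y) (hh.le_one y) z
    _ ≤ L * dist y z + M * (K * dist y z) := by
        gcongr
        · exact hL.dist_le_mul y hy z hz
        · exact hK.dist_le_mul y z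
    _ = (L + M.toNNReal * K : ℝ≥0) * dist y z := by
        push_cast
        rw [Real.coe_toNNReal _ hM]
        ring

lemma IsLipschitzCutoff.derivLE_excise (hh : IsLipschitzCutoff W h G) (hM : 0 ≤ M)
    (hv : LocLipOn v Ω) {γ : Curve Y} (hγ : γ.In Ω) (hg : γ.DerivLE v g) :
    γ.DerivLE (excise M h v) fun x => Wᶜ.indicator g x + ENNReal.ofReal M * G x := by
  obtain ⟨K, hK⟩ := hh.lipschitz
  obtain ⟨L, hL⟩ := hv.exists_lipschitzOnWith_comp hγ
  have hG := hh.derivLE γ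
  have hdv : ∀ᵐ t, _ := hL.ae_differentiableWithinAt_of_mem
  have hLh : LipschitzOnWith (K * 1) (fun t => h (γ.toFun t)) (Icc 0 γ.len) :=
    hK.comp_lipschitzOnWith γ.lip
  have hdh : ∀ᵐ t, _ := hLh.ae_differentiableWithinAt_of_mem
  simp only [Curve.DerivLE] at hg hG ⊢
  rw [← restrict_Ioo_eq_restrict_Icc, ae_restrict_iff' measurableSet_Ioo] at hg hG ⊢
  filter_upwards [hdv, hdh, hg, hG] with t hdv hdh hg hG ht
  have hnhds : Icc 0 γ.len ∈ 𝓝 t := Icc_mem_nhds ht.1 ht.2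
  have htIcc := Ioo_subset_Icc_self ht
  by_cases hW : γ.toFun t ∈ W
  · have hzero : (fun s => excise M h v (γ.toFun s)) =ᶠ[𝓝 t] fun _ => 0 := by
      filter_upwards [(γ.lip.continuousOn.continuousAt hnhds).eventually
        (hh.isOpen.mem_nhds hW)] with s hs
      rw [excise, hh.eq_one _ hs, sub_self, mul_zero]
    simp [hzero.deriv_eq]
  · rw [indicator_of_mem (mem_compl hW)]
    calc ENNReal.ofReal |deriv (fun s => excise M h v (γ.toFun s)) t|
        ≤ ENNReal.ofReal (|deriv (fun s => v (γ.toFun s)) t| +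
            M * |deriv (fun s => h (γ.toFun s)) t|) := by
          refine ENNReal.ofReal_le_ofReal ?_
          simpa only [one_mul] using abs_deriv_le_of_eventually_abs_sub_le zero_le_one hM
            ((hdv htIcc).differentiableAt hnhds) ((hdh htIcc).differentiableAt hnhds)
            (Eventually.of_forall fun s => by
              rw [one_mul]
              exact abs_excise_sub_excise_le hM (hh.nonneg _) (hh.le_one _) _)
      _ = ENNReal.ofReal |deriv (fun s => v (γ.toFun s)) t| +
            ENNReal.ofReal M * ENNReal.ofReal |deriv (fun s => h (γ.toFun s)) t| := by
          rw [ENNReal.ofReal_add (abs_nonneg _) (by positivity), ENNReal.ofReal_mul hM]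
      _ ≤ g (γ.toFun t) + ENNReal.ofReal M * G (γ.toFun t) := by
          gcongr
          exacts [hg ht, hG ht]

lemma IsLipschitzCutoff.derivLEOnAECurve_excise {μ : Measure Y} (hh : IsLipschitzCutoff W h G)
    (hM : 0 ≤ M) (hv : LocLipOn v Ω) (hg : DerivLEOnAECurve μ v g Ω) :
    DerivLEOnAECurve μ (excise M h v) (fun x => Wᶜ.indicator g x + ENNReal.ofReal M * G x) Ω :=
  ZeroMod.mono hg fun _ hγ => ⟨hγ.1, fun hderiv => hγ.2 (hh.derivLE_excise hM hv hγ.1 hderiv)⟩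

end

variable {μ : Measure X} {W Ω : Set X} {h v : X → ℝ} {G g : X → ℝ≥0∞} {M : ℝ}

lemma IsLipschitzCutoff.isWeakUpperGradientOn_excise [SecondCountableTopology X]
    (hh : IsLipschitzCutoff W h G) (hM : 0 ≤ M) (hΩ : MeasurableSet Ω) (hv : LocLipOn v Ω)
    (hg : IsWeakUpperGradientOn μ v g Ω) (hloc : LIntegrableLocOn μ g Ω) :
    IsWeakUpperGradientOn μ (excise M h v)
      (fun x => Wᶜ.indicator g x + ENNReal.ofReal M * G x) Ω :=
  (hh.derivLEOnAECurve_excise hM hv (hg.derivLEOnAECurve hΩ hloc)).isWeakUpperGradientOn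
    (hh.locLipOn_excise hM hv) ((hg.1.indicator hh.isOpen.measurableSet.compl).add
      (hh.measurable_gradient.const_mul _).aemeasurable)

lemma IsLipschitzCutoff.setLIntegral_excise_add_le (hh : IsLipschitzCutoff W h G) (M : ℝ) :
    (∫⁻ x in Ω, (Wᶜ.indicator g x + ENNReal.ofReal M * G x) ∂μ) + ∫⁻ x in W ∩ Ω, g x ∂μ ≤
      (∫⁻ x in Ω, g x ∂μ) + ENNReal.ofReal M * ∫⁻ x, G x ∂μ := by
  have hW : MeasurableSet W := hh.isOpen.measurableSet
  calc _ = (∫⁻ x in W ∩ Ω, g x ∂μ) + (∫⁻ x in Wᶜ ∩ Ω, g x ∂μ) +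
        ENNReal.ofReal M * ∫⁻ x in Ω, G x ∂μ := by
        rw [lintegral_add_right _ (hh.measurable_gradient.const_mul _),
          lintegral_const_mul _ hh.measurable_gradient, lintegral_indicator hW.compl,
          Measure.restrict_restrict hW.compl]
        ring
    _ = (∫⁻ x in Ω, g x ∂μ) + ENNReal.ofReal M * ∫⁻ x in Ω, G x ∂μ := by
        rw [← Measure.restrict_restrict hW, ← Measure.restrict_restrict hW.compl,
          lintegral_add_compl _ hW]
    _ ≤ (∫⁻ x in Ω, g x ∂μ) + ENNReal.ofReal M * ∫⁻ x, G x ∂μ := by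
        gcongr
        exact Measure.restrict_le_self

end Excision

section Convergence

lemma tendsto_lintegral_ofReal_abs_sub_atTop {α : Type*} [MeasurableSpace α] {ν : Measure α}
    {u : α → ℝ} (hu : AEMeasurable u ν) (hfin : ∫⁻ x, ENNReal.ofReal |u x| ∂ν ≠ ∞) {M : ℕ → ℝ}
    (hM₀ : ∀ j, 0 ≤ M j) (hM : Tendsto M atTop atTop) :
    Tendsto (fun j => ∫⁻ x, ENNReal.ofReal (|u x| - M j) ∂ν) atTop (𝓝 0) := by
  rw [← lintegral_zero (μ := ν)]
  refine tendsto_lintegral_of_dominated_convergence' (fun x => ENNReal.ofReal |u x|)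
    (fun j => ((measurable_abs.comp_aemeasurable hu).sub_const _).ennreal_ofReal)
    (fun j => ae_of_all _ fun x => ENNReal.ofReal_le_ofReal (sub_le_self _ (hM₀ j))) hfin
    (ae_of_all _ fun x => tendsto_const_nhds.congr' ?_)
  filter_upwards [hM.eventually_ge_atTop |u x|] with j hj
  exact (ENNReal.ofReal_eq_zero.2 (sub_nonpos.2 hj)).symm

lemma lintegral_abs_excise_sub_le {α : Type*} [MeasurableSpace α] {ν : Measure α} {M : ℝ}
    {h u v : α → ℝ} (hM : 0 ≤ M) (hu : AEMeasurable u ν) (hm : Measurable h) (h₀ : 0 ≤ h) :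
    ∫⁻ y, ENNReal.ofReal |excise M h v y - u y| ∂ν ≤
      (∫⁻ y, ENNReal.ofReal |v y - u y| ∂ν) + ENNReal.ofReal M * (∫⁻ y, ENNReal.ofReal (h y) ∂ν) +
        ∫⁻ y, ENNReal.ofReal (|u y| - M) ∂ν := by
  have hcut : Measurable fun y => ENNReal.ofReal M * ENNReal.ofReal (h y) :=
    hm.ennreal_ofReal.const_mul _
  have htail : AEMeasurable (fun y => ENNReal.ofReal (|u y| - M)) ν :=
    ((measurable_abs.comp_aemeasurable hu).sub_const M).ennreal_ofReal
  rw [← lintegral_const_mul _ hm.ennreal_ofReal, ← lintegral_add_right _ hcut,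
    ← lintegral_add_right' _ htail]
  refine lintegral_mono fun y => ?_
  calc ENNReal.ofReal |excise M h v y - u y|
      ≤ ENNReal.ofReal (|v y - u y| + M * h y + max 0 (|u y| - M)) :=
        ENNReal.ofReal_le_ofReal (abs_excise_sub_le hM (h₀ y) (u y))
    _ = ENNReal.ofReal |v y - u y| + ENNReal.ofReal M * ENNReal.ofReal (h y) +
          ENNReal.ofReal (|u y| - M) := by
        have hMh : 0 ≤ M * h y := mul_nonneg hM (h₀ y)
        rw [ENNReal.ofReal_add (by positivity) (le_max_left _ _),
          ENNReal.ofReal_add (abs_nonneg _) hMh, ENNReal.ofReal_mul hM, ENNReal.ofReal_max,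
          ENNReal.ofReal_zero, max_eq_right zero_le]

variable {Y : Type*} [MetricSpace Y] [MeasurableSpace Y] {μ : Measure Y} {Ω : Set Y} {u : Y → ℝ}
  {v h : ℕ → Y → ℝ} {M : ℕ → ℝ}

lemma L1LocConv.comp_tendsto (hv : L1LocConv μ Ω v u) {i : ℕ → ℕ} (hi : Tendsto i atTop atTop) :
    L1LocConv μ Ω (fun j => v (i j)) u := fun x hx =>
  let ⟨r, hr, hlim⟩ := hv x hx
  ⟨r, hr, hlim.comp hi⟩

lemma L1LocConv.excise (hv : L1LocConv μ Ω v u) (hu : MemL1Loc μ Ω u) (hM₀ : ∀ j, 0 ≤ M j)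
    (hM : Tendsto M atTop atTop) (hm : ∀ j, Measurable (h j)) (h₀ : ∀ j, 0 ≤ h j)
    (hlim : Tendsto (fun j => ENNReal.ofReal (M j) * ∫⁻ y, ENNReal.ofReal (h j y) ∂μ) atTop
      (𝓝 0)) :
    L1LocConv μ Ω (fun j => excise (M j) (h j) (v j)) u := fun x hx => by
  obtain ⟨r, hr, hconv⟩ := hv x hx
  obtain ⟨s, hs, hfin⟩ := hu.2 x hx
  refine ⟨min r s, lt_min hr hs, ?_⟩
  set S : Set Y := Ω ∩ ball x (min r s)
  have hSr : S ⊆ Ω ∩ ball x r := inter_subset_inter_right _ (ball_subset_ball (min_le_left r s))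
  have hSs : S ⊆ Ω ∩ ball x s := inter_subset_inter_right _ (ball_subset_ball (min_le_right r s))
  have huS : AEMeasurable u (μ.restrict S) :=
    hu.1.mono_measure (Measure.restrict_mono inter_subset_left le_rfl)
  have hvS : Tendsto (fun j => ∫⁻ y in S, ENNReal.ofReal |v j y - u y| ∂μ) atTop (𝓝 0) :=
    tendsto_of_tendsto_of_tendsto_of_le_of_le tendsto_const_nhds hconv (fun _ => zero_le)
      fun _ => lintegral_mono_set hSr
  have htail := tendsto_lintegral_ofReal_abs_sub_atTop huS
    ((lintegral_mono_set hSs).trans_lt hfin).ne hM₀ hM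
  have hsum := (hvS.add hlim).add htail
  rw [add_zero, add_zero] at hsum
  exact tendsto_of_tendsto_of_tendsto_of_le_of_le tendsto_const_nhds hsum (fun _ => zero_le)
    fun j => (lintegral_abs_excise_sub_le (hM₀ j) huS (hm j) (h₀ j)).trans (by
      gcongr
      exact Measure.restrict_le_self)

end Convergence

section CapacityStep

lemma exists_lt_setLIntegral_inter_of_monotone {α : Type*} [MeasurableSpace α] {ν : Measure α}
    {W : ℕ → Set α} {Ω : Set α} {g : α → ℝ≥0∞} {a : ℝ≥0∞} (hW : Monotone W)
    (ha : a < ∫⁻ x in (⋃ k, W k) ∩ Ω, g x ∂ν) : ∃ k, a < ∫⁻ x in W k ∩ Ω, g x ∂ν := by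
  have hdir : Directed (· ⊆ ·) fun k => W k ∩ Ω :=
    Monotone.directed_le fun _ _ hkl => inter_subset_inter_left _ (hW hkl)
  rwa [iUnion_inter, setLIntegral_iUnion_of_directed _ hdir, lt_iSup_iff] at ha

lemma tendsto_ofReal_two_pow_mul {c : ℝ≥0∞} (hc : c ≠ ∞) :
    Tendsto (fun j : ℕ => ENNReal.ofReal (2 ^ j) * (c * ENNReal.ofReal ((1 / 4) ^ j))) atTop
      (𝓝 0) := by
  have hhalf : Tendsto (fun j : ℕ => ENNReal.ofReal ((1 / 2) ^ j)) atTop (𝓝 0) := by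
    rw [← ENNReal.ofReal_zero]
    exact ENNReal.tendsto_ofReal
      (tendsto_pow_atTop_nhds_zero_of_lt_one (by norm_num) (by norm_num))
  rw [← mul_zero c]
  refine (ENNReal.Tendsto.const_mul hhalf (Or.inr hc)).congr fun j => ?_
  rw [mul_left_comm, ← ENNReal.ofReal_mul (by positivity), ← mul_pow]
  norm_num

variable {μ : Measure X} {Ω : Set X} {u : X → ℝ} {Cd CP lam : ℝ} {T δ a : ℝ≥0∞}

lemma exists_isWeakUpperGradientOn_excise_of_capa1_lt [ProperSpace X]
    (hD : Doubling μ Cd) (hP : Poincare μ CP lam) (hΩ : IsOpen Ω) {v : ℕ → X → ℝ}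
    {g : ℕ → X → ℝ≥0∞} (hv : ∀ i, LocLipOn (v i) Ω)
    (hg : ∀ i, IsWeakUpperGradientOn μ (v i) (g i) Ω) (hL : L1LocConv μ Ω v u)
    (hT : ∃ᶠ i in atTop, ∫⁻ x in Ω, g i x ∂μ < T) {A : Set X} (hAΩ : A ⊆ Ω)
    (hcap : capa1 μ A < δ) (ha : a < tv μ A u) {M : ℝ} (hM : 0 ≤ M) (j : ℕ) :
    ∃ i ≥ j, ∃ (h : X → ℝ) (G : X → ℝ≥0∞), Measurable h ∧ 0 ≤ h ∧
      ∫⁻ x, ENNReal.ofReal (h x) ∂μ ≤ 2 * δ ∧ LocLipOn (excise M h (v i)) Ω ∧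
      IsWeakUpperGradientOn μ (excise M h (v i)) G Ω ∧
      (∫⁻ x in Ω, G x ∂μ) + a ≤ T + ENNReal.ofReal M * (12 * δ) := by
  have := hD.isLocallyFiniteMeasure
  obtain ⟨W, h, G, hcut, hWmono, hAW, hh, hG⟩ := exists_isLipschitzCutoff_of_capa1_lt hD hP hcap
  have hO : IsOpen ((⋃ k, W k) ∩ Ω) := (isOpen_iUnion fun k => (hcut k).isOpen).inter hΩ
  have hlower := eventually_lt_setLIntegral_of_lt_tvOpen hO.measurableSet inter_subset_right hv hg
    hL (ha.trans_le (tv_le_tvOpen hO (subset_inter hAW hAΩ)))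
  obtain ⟨i, hiT, hilower, hij⟩ := (hT.and_eventually (hlower.and (eventually_ge_atTop j))).exists
  obtain ⟨k, hk⟩ := exists_lt_setLIntegral_inter_of_monotone hWmono hilower
  obtain ⟨K, hK⟩ := (hcut k).lipschitz
  refine ⟨i, hij, h k, _, hK.continuous.measurable, (hcut k).nonneg, hh k,
    (hcut k).locLipOn_excise hM (hv i), (hcut k).isWeakUpperGradientOn_excise hM hΩ.measurableSet
      (hv i) (hg i) (LIntegrableLocOn.of_setLIntegral_ne_top hiT.ne_top), ?_⟩
  calc _ ≤ _ := add_le_add_right hk.le _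
    _ ≤ _ := (hcut k).setLIntegral_excise_add_le M
    _ ≤ T + ENNReal.ofReal M * (12 * δ) := by
      gcongr
      exact hG k

lemma tvOpen_add_le_of_forall_capa1_lt [ProperSpace X]
    (hD : Doubling μ Cd) (hP : Poincare μ CP lam) (hΩ : IsOpen Ω) (hu : MemL1Loc μ Ω u)
    {A : ℕ → Set X} (hAΩ : ∀ j, A j ⊆ Ω)
    (hcap : ∀ j, capa1 μ (A j) < ENNReal.ofReal ((1 / 4) ^ j)) (ha : ∀ j, a < tv μ (A j) u) :
    tvOpen μ Ω u + a ≤ tvOpen μ Ω u := by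
  have := hD.isLocallyFiniteMeasure
  refine le_of_forall_gt_imp_ge_of_dense fun T hT => ?_
  obtain ⟨v, g, hv, hg, hL, hfreq⟩ := exists_seq_of_tvOpen_lt hT
  have hM₀ : ∀ j : ℕ, (0 : ℝ) ≤ 2 ^ j := fun j => by positivity
  choose i hij h G hm h₀ hint hlip hG hle using fun j =>
    exists_isWeakUpperGradientOn_excise_of_capa1_lt hD hP hΩ hv hg hL hfreq (hAΩ j) (hcap j) (ha j)
      (hM₀ j) j
  have hsmall : Tendsto (fun j => ENNReal.ofReal (2 ^ j) * ∫⁻ x, ENNReal.ofReal (h j x) ∂μ) atTop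
      (𝓝 0) :=
    tendsto_of_tendsto_of_tendsto_of_le_of_le tendsto_const_nhds
      (tendsto_ofReal_two_pow_mul ENNReal.ofNat_ne_top) (fun _ => zero_le)
      fun j => mul_le_mul_right (hint j) _
  have hconv : L1LocConv μ Ω (fun j => excise (2 ^ j) (h j) (v (i j))) u :=
    (hL.comp_tendsto (tendsto_atTop_mono hij tendsto_id)).excise hu hM₀
      (tendsto_pow_atTop_atTop_of_one_lt one_lt_two) hm h₀ hsmall
  have hbound : Tendsto (fun j : ℕ => T + ENNReal.ofReal (2 ^ j) *
      (12 * ENNReal.ofReal ((1 / 4) ^ j))) atTop (𝓝 T) := by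
    simpa only [add_zero] using
      (tendsto_ofReal_two_pow_mul ENNReal.ofNat_ne_top).const_add T
  calc tvOpen μ Ω u + a ≤ liminf (fun j => ∫⁻ x in Ω, G j x ∂μ) atTop + a := by
        gcongr
        exact tvOpen_le_liminf hΩ.measurableSet hlip hG hconv
    _ = liminf (fun j => (∫⁻ x in Ω, G j x ∂μ) + a) atTop :=
        (liminf_add_const _ _ _ (by isBoundedDefault) (by isBoundedDefault)).symm
    _ ≤ T := (liminf_le_liminf (Eventually.of_forall hle)).trans_eq hbound.liminf_eq

end CapacityStep

/-- Absolute continuity of the variation measure with respect to the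
`1`-capacity: if `Ω` is open and `u ∈ L¹_loc(Ω)` with `‖Du‖(Ω) < ∞`, then for every
`ε > 0` there is `δ > 0` such that `A ⊆ Ω` and `capa₁(A) < δ` imply `‖Du‖(A) < ε`. -/
theorem tv_absolutely_continuous_wrt_capa
    (μ : Measure X) (hcomp : CompleteSpace X)
    (hdoub : ∃ Cd : ℝ, Doubling μ Cd) (hpoin : ∃ CP lam : ℝ, Poincare μ CP lam)
    (Ω : Set X) (hΩ : IsOpen Ω) (u : X → ℝ)
    (hu : MemL1Loc μ Ω u) (hfin : tvOpen μ Ω u < ∞) :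
    ∀ ε : ℝ, 0 < ε → ∃ δ : ℝ, 0 < δ ∧
      ∀ A : Set X, A ⊆ Ω → capa1 μ A < ENNReal.ofReal δ → tv μ A u < ENNReal.ofReal ε := by
  obtain ⟨Cd, hD⟩ := hdoub
  obtain ⟨CP, lam, hP⟩ := hpoin
  have := hD.properSpace
  intro ε hε
  by_contra! hcon
  have hseq : ∀ j : ℕ, ∃ A ⊆ Ω, capa1 μ A < ENNReal.ofReal ((1 / 4) ^ j) ∧
      ENNReal.ofReal ε ≤ tv μ A u := fun j => hcon _ (by positivity)
  choose A hAΩ hcap hA using hseq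
  have hhalf : ENNReal.ofReal (ε / 2) < ENNReal.ofReal ε :=
    (ENNReal.ofReal_lt_ofReal_iff hε).2 (half_lt_self hε)
  have hdrop : tvOpen μ Ω u + ENNReal.ofReal (ε / 2) ≤ tvOpen μ Ω u :=
    tvOpen_add_le_of_forall_capa1_lt hD hP hΩ hu hAΩ hcap fun j => hhalf.trans_le (hA j)
  exact hdrop.not_gt (ENNReal.lt_add_right hfin.ne (ENNReal.ofReal_pos.2 (half_pos hε)).ne')

end PaperBV
end
end

section
/- Let U ⊂ X be a 1-quasiopen set and let A ⊂ X satisfy H(A) = 0, where H is the codimension-one Hausdorff measure. Then both U∖A and U∪A are 1-quasiopen sets. -/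
open MeasureTheory Filter Metric Set
open scoped Topology ENNReal NNReal symmDiff

noncomputable section

namespace PaperBV

variable {X : Type*} [MetricSpace X] [MeasurableSpace X] [BorelSpace X]

/-!
A single ball `B(c, r)` with `r ≤ R` has capacity at most `(R + 1) C_d μ(B(c, r)) / r`: test with
the cutoff that equals `1` on the ball, vanishes outside `B(c, 2r)` and is `1/r`-Lipschitz. Summing
over a covering, an `H`-null set `A` lies in open sets of arbitrarily small capacity. Adding such a
set to the exceptional open set `G` of `U` yields an exceptional set containing `A`, and once
`A ⊆ G` neither removing `A` from `U` nor adding it changes `U ∪ G`.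

The infimum in `capa1` runs over possibly nonmeasurable functions, for which `∫⁻` is a lower
integral and hence not subadditive. Subadditivity is therefore proved for a capacity with Borel
test functions, which `capa1` absorbs one set at a time.
-/

section Real

lemma volume_image_le_of_lipschitzOnWith {f : ℝ → ℝ} {K : ℝ≥0} {s : Set ℝ}
    (hf : LipschitzOnWith K f s) : volume (f '' s) ≤ K * volume s := by
  simpa only [hausdorffMeasure_real, ENNReal.rpow_one] using
    hf.hausdorffMeasure_image_le zero_le_one

lemma ofReal_abs_sub_le_mul_volume_ne_zero {f : ℝ → ℝ} {K : ℝ≥0} {a b : ℝ}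
    (hf : LipschitzOnWith K f (uIcc a b)) :
    ENNReal.ofReal |f a - f b| ≤ K * volume {t ∈ uIcc a b | f t ≠ 0} := by
  have hsub : uIcc (f a) (f b) \ {0} ⊆ f '' {t ∈ uIcc a b | f t ≠ 0} := by
    rintro y ⟨hy, hy0⟩
    obtain ⟨t, ht, rfl⟩ := intermediate_value_uIcc hf.continuousOn hy
    exact ⟨t, ⟨ht, hy0⟩, rfl⟩
  calc ENNReal.ofReal |f a - f b|
      = volume (uIcc (f a) (f b) \ {0}) := by
        rw [measure_sdiff_null Real.volume_singleton, Real.volume_interval, abs_sub_comm]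
    _ ≤ volume (f '' {t ∈ uIcc a b | f t ≠ 0}) := measure_mono hsub
    _ ≤ K * volume {t ∈ uIcc a b | f t ≠ 0} :=
        volume_image_le_of_lipschitzOnWith (hf.mono (sep_subset _ _))

lemma ofReal_iSup_le_tsum {ι : Type*} (u : ι → ℝ) :
    ENNReal.ofReal (⨆ i, u i) ≤ ∑' i, ENNReal.ofReal (u i) := by
  by_cases htop : ∑' i, ENNReal.ofReal (u i) = ∞
  · exact le_of_le_of_eq le_top htop.symm
  refine (ENNReal.ofReal_le_iff_le_toReal htop).2 (Real.iSup_le (fun i => ?_) ENNReal.toReal_nonneg)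
  exact (ENNReal.ofReal_le_iff_le_toReal htop).1 (ENNReal.le_tsum i)

end Real

section UpperGradientInequality

variable {Y : Type*} [MetricSpace Y] {u v : Y → ℝ} {g k : Y → ℝ≥0∞} {γ : Curve Y}

lemma UGIneq.mono (h : UGIneq u g γ) (hgk : g ≤ k) : UGIneq u k γ :=
  h.trans (lintegral_mono fun t => hgk (γ.toFun t))

lemma UGIneq.sup (hu : UGIneq u g γ) (hv : UGIneq v k γ) : UGIneq (u ⊔ v) (g + k) γ := by
  refine le_trans ?_ ((add_le_add hu hv).trans (le_lintegral_add _ _))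
  rw [← ENNReal.ofReal_add (abs_nonneg _) (abs_nonneg _)]
  exact ENNReal.ofReal_le_ofReal <| (abs_max_sub_max_le_max _ _ _ _).trans <|
    max_le_add_of_nonneg (abs_nonneg _) (abs_nonneg _)

lemma UGIneq.iSup {ι : Type*} {u : ι → Y → ℝ} (hbdd : ∀ x, BddAbove (range fun i => u i x))
    (hu : ∀ i, UGIneq (u i) g γ) : UGIneq (fun x => ⨆ i, u i x) g γ := by
  cases isEmpty_or_nonempty ι
  · simp [UGIneq]
  by_cases hfin : γ.integral g = ∞
  · exact le_of_le_of_eq le_top hfin.symm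
  have hle (i : ι) := abs_sub_le_iff.1 ((ENNReal.ofReal_le_iff_le_toReal hfin).1 (hu i))
  rw [UGIneq, ENNReal.ofReal_le_iff_le_toReal hfin, abs_sub_le_iff]
  constructor <;> refine sub_le_iff_le_add.2 (ciSup_le fun i => ?_)
  · linarith [(hle i).1, le_ciSup (hbdd (γ.toFun γ.len)) i]
  · linarith [(hle i).2, le_ciSup (hbdd (γ.toFun 0)) i]

lemma ugIneq_indicator_of_lipschitzWith {K : ℝ≥0} (hu : LipschitzWith K u) {S : Set Y}
    (hS : ∀ x ∉ S, u x = 0) : UGIneq u (S.indicator fun _ => (K : ℝ≥0∞)) γ := by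
  set f : ℝ → ℝ := u ∘ γ.toFun
  set T : Set ℝ := {t | f t ≠ 0}
  have hf : LipschitzOnWith K f (Icc 0 γ.len) := by
    simpa only [mul_one] using hu.comp_lipschitzOnWith γ.lip
  have hT : NullMeasurableSet T (volume.restrict (Icc 0 γ.len)) :=
    (hf.continuousOn.aemeasurable measurableSet_Icc).nullMeasurableSet_preimage
      (measurableSet_singleton 0).compl
  have hTS : T ⊆ γ.toFun ⁻¹' S := fun t ht => by_contra fun htS => ht (hS _ htS)
  rw [← uIcc_of_le γ.len_nonneg] at hf
  calc ENNReal.ofReal |f 0 - f γ.len|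
      ≤ K * volume (uIcc 0 γ.len ∩ T) := ofReal_abs_sub_le_mul_volume_ne_zero hf
    _ = ∫⁻ t in Icc 0 γ.len, T.indicator (fun _ => (K : ℝ≥0∞)) t := by
        rw [lintegral_indicator_const₀ hT, Measure.restrict_apply₀ hT, inter_comm,
          uIcc_of_le γ.len_nonneg]
    _ ≤ γ.integral (S.indicator fun _ => (K : ℝ≥0∞)) :=
        lintegral_mono (indicator_le_indicator_of_subset hTS fun _ => zero_le)

end UpperGradientInequality

section WeakUpperGradient

variable {Y : Type*} [MetricSpace Y] [MeasurableSpace Y]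
  {μ : Measure Y} {A : Set Y} {u v : Y → ℝ} {g k : Y → ℝ≥0∞}

lemma IsWeakUpperGradientOn.sup (hu : IsWeakUpperGradientOn μ u g A) (hv : IsUpperGradient v k) :
    IsWeakUpperGradientOn μ (u ⊔ v) (g + k) A := by
  obtain ⟨hg, ρ, hρ, hρ_lt, hρ_top⟩ := hu
  refine ⟨hg.add hv.1.aemeasurable, ρ, hρ, hρ_lt, ?_⟩
  rintro γ ⟨hγA, hγ⟩
  exact hρ_top γ ⟨hγA, fun huγ => hγ (huγ.sup (hv.2 γ))⟩

lemma capa1_eq_iInf (μ : Measure Y) (A : Set Y) :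
    capa1 μ A = ⨅ (u : Y → ℝ) (g : Y → ℝ≥0∞) (_ : IsWeakUpperGradientOn μ u g univ)
      (_ : ∀ x ∈ A, 1 ≤ u x), (∫⁻ x, ENNReal.ofReal |u x| ∂μ) + ∫⁻ x, g x ∂μ := by
  apply le_antisymm
  · refine le_iInf₂ fun u g => le_iInf₂ fun hg hu => ?_
    have hnorm : NNorm μ univ u ≤ (∫⁻ x, ENNReal.ofReal |u x| ∂μ) + ∫⁻ x, g x ∂μ := by
      simp only [NNorm, Measure.restrict_univ]
      gcongr
      exact iInf₂_le g hg
    rcases eq_top_or_lt_top ((∫⁻ x, ENNReal.ofReal |u x| ∂μ) + ∫⁻ x, g x ∂μ) with htop | hlt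
    · exact le_of_le_of_eq le_top htop.symm
    · exact (iInf₂_le_of_le u (hnorm.trans_lt hlt) (iInf_le _ hu)).trans hnorm
  · refine le_iInf₂ fun u _ => le_iInf fun hu => ?_
    simp only [NNorm, Measure.restrict_univ, ENNReal.add_iInf]
    exact le_iInf₂ fun g hg => iInf₂_le_of_le u g (iInf₂_le hg hu)

lemma capa1_le_lintegral_add (hg : IsWeakUpperGradientOn μ u g univ) (hu : ∀ x ∈ A, 1 ≤ u x) :
    capa1 μ A ≤ (∫⁻ x, ENNReal.ofReal |u x| ∂μ) + ∫⁻ x, g x ∂μ :=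
  (capa1_eq_iInf μ A).trans_le (iInf₂_le_of_le u g (iInf₂_le hg hu))

end WeakUpperGradient

section BorelCapacity

variable {Y : Type*} [MetricSpace Y] [MeasurableSpace Y]

/-- The pair `(u, g)` is admissible for the Borel capacity of `A`: `u` is a Borel function with
values in `[0, 1]` which equals `1` on `A`, and `g` is an upper gradient of `u`. -/
structure IsAdmissible (A : Set Y) (u : Y → ℝ) (g : Y → ℝ≥0∞) : Prop where
  measurable : Measurable u
  nonneg : ∀ x, 0 ≤ u x
  le_one : ∀ x, u x ≤ 1
  one_le : ∀ x ∈ A, 1 ≤ u x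
  isUpperGradient : IsUpperGradient u g

/-- The variant of the `1`-capacity `capa1` in which the test functions are Borel, take values in
`[0, 1]` and come with a genuine rather than a weak upper gradient. Measurability makes it
countably subadditive, and the bound by `1` keeps suprema of test functions finite. -/
def borelCapa1 (μ : Measure Y) (A : Set Y) : ℝ≥0∞ :=
  ⨅ (u : Y → ℝ) (g : Y → ℝ≥0∞) (_ : IsAdmissible A u g),
    (∫⁻ x, ENNReal.ofReal (u x) ∂μ) + ∫⁻ x, g x ∂μ

variable {μ : Measure Y} {A : Set Y} {u : Y → ℝ} {g : Y → ℝ≥0∞}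

lemma IsAdmissible.borelCapa1_le (h : IsAdmissible A u g) :
    borelCapa1 μ A ≤ (∫⁻ x, ENNReal.ofReal (u x) ∂μ) + ∫⁻ x, g x ∂μ :=
  iInf₂_le_of_le u g (iInf_le _ h)

lemma exists_isAdmissible_lt_of_borelCapa1_lt {a : ℝ≥0∞} (h : borelCapa1 μ A < a) :
    ∃ u g, IsAdmissible A u g ∧ (∫⁻ x, ENNReal.ofReal (u x) ∂μ) + ∫⁻ x, g x ∂μ < a := by
  simpa only [borelCapa1, iInf_lt_iff, exists_prop] using h

lemma capa1_union_le (μ : Measure Y) (A B : Set Y) :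
    capa1 μ (A ∪ B) ≤ capa1 μ A + borelCapa1 μ B := by
  rw [capa1_eq_iInf μ A, borelCapa1]
  simp only [ENNReal.iInf_add, ENNReal.add_iInf]
  refine le_iInf₂ fun v k => le_iInf fun hv => le_iInf₂ fun u g => le_iInf₂ fun hg hu => ?_
  have huv : ∀ x ∈ A ∪ B, 1 ≤ (u ⊔ v) x := by
    rintro x (hx | hx)
    · exact le_max_of_le_left (hu x hx)
    · exact le_max_of_le_right (hv.one_le x hx)
  have habs (x : Y) :
      ENNReal.ofReal |(u ⊔ v) x| ≤ ENNReal.ofReal |u x| + ENNReal.ofReal (v x) := by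
    rw [← ENNReal.ofReal_add (abs_nonneg _) (hv.nonneg x)]
    refine ENNReal.ofReal_le_ofReal (abs_max_le_max_abs_abs.trans ?_)
    rw [abs_of_nonneg (hv.nonneg x)]
    exact max_le_add_of_nonneg (abs_nonneg _) (hv.nonneg x)
  calc capa1 μ (A ∪ B)
      ≤ (∫⁻ x, ENNReal.ofReal |(u ⊔ v) x| ∂μ) + ∫⁻ x, (g + k) x ∂μ :=
        capa1_le_lintegral_add (hg.sup hv.isUpperGradient) huv
    _ ≤ ((∫⁻ x, ENNReal.ofReal |u x| ∂μ) + ∫⁻ x, ENNReal.ofReal (v x) ∂μ)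
        + ((∫⁻ x, g x ∂μ) + ∫⁻ x, k x ∂μ) := by
        rw [← lintegral_add_right _ hv.measurable.ennreal_ofReal,
          ← lintegral_add_right _ hv.isUpperGradient.1]
        exact add_le_add (lintegral_mono habs) le_rfl
    _ = _ := add_add_add_comm _ _ _ _

section Countable

variable {ι : Type*} [Countable ι] {s : ι → Set Y} {u : ι → Y → ℝ} {g : ι → Y → ℝ≥0∞}

lemma IsAdmissible.iUnion (h : ∀ i, IsAdmissible (s i) (u i) (g i)) :
    IsAdmissible (⋃ i, s i) (fun x => ⨆ i, u i x) (fun x => ∑' i, g i x) := by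
  have hbdd (x : Y) : BddAbove (range fun i => u i x) :=
    ⟨1, forall_mem_range.2 fun i => (h i).le_one x⟩
  refine ⟨.iSup fun i => (h i).measurable, fun x => Real.iSup_nonneg fun i => (h i).nonneg x,
    fun x => Real.iSup_le (fun i => (h i).le_one x) zero_le_one, fun x hx => ?_,
    .tsum fun i => (h i).isUpperGradient.1, fun γ => ?_⟩
  · obtain ⟨i, hi⟩ := mem_iUnion.1 hx
    exact ((h i).one_le x hi).trans (le_ciSup (hbdd x) i)
  · exact .iSup hbdd fun i => ((h i).isUpperGradient.2 γ).mono fun x => ENNReal.le_tsum i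

lemma IsAdmissible.borelCapa1_iUnion_le_tsum (h : ∀ i, IsAdmissible (s i) (u i) (g i)) :
    borelCapa1 μ (⋃ i, s i) ≤
      ∑' i, ((∫⁻ x, ENNReal.ofReal (u i x) ∂μ) + ∫⁻ x, g i x ∂μ) := by
  refine (IsAdmissible.iUnion h).borelCapa1_le.trans ?_
  rw [ENNReal.tsum_add,
    ← lintegral_tsum fun i => (h i).measurable.ennreal_ofReal.aemeasurable,
    ← lintegral_tsum fun i => (h i).isUpperGradient.1.aemeasurable]
  exact add_le_add (lintegral_mono fun x => ofReal_iSup_le_tsum fun i => u i x) le_rfl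

lemma borelCapa1_iUnion_le (μ : Measure Y) (s : ι → Set Y) :
    borelCapa1 μ (⋃ i, s i) ≤ ∑' i, borelCapa1 μ (s i) := by
  refine ENNReal.le_of_forall_pos_le_add fun ε hε hfin => ?_
  obtain ⟨δ, hδ, hδ_sum⟩ := ENNReal.exists_pos_sum_of_countable (ENNReal.coe_pos.2 hε).ne' ι
  have hlt (i : ι) : borelCapa1 μ (s i) < borelCapa1 μ (s i) + δ i :=
    ENNReal.lt_add_right (ENNReal.ne_top_of_tsum_ne_top hfin.ne i) (ENNReal.coe_pos.2 (hδ i)).ne'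
  choose u g hug hug_lt using fun i => exists_isAdmissible_lt_of_borelCapa1_lt (hlt i)
  calc borelCapa1 μ (⋃ i, s i)
      ≤ ∑' i, ((∫⁻ x, ENNReal.ofReal (u i x) ∂μ) + ∫⁻ x, g i x ∂μ) :=
        IsAdmissible.borelCapa1_iUnion_le_tsum hug
    _ ≤ ∑' i, (borelCapa1 μ (s i) + δ i) := ENNReal.tsum_le_tsum fun i => (hug_lt i).le
    _ ≤ ∑' i, borelCapa1 μ (s i) + ε := by
        rw [ENNReal.tsum_add]
        gcongr

end Countable

end BorelCapacity

section HausdorffContent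

variable {Y : Type*} [MetricSpace Y] [MeasurableSpace Y] [OpensMeasurableSpace Y]
  {μ : Measure Y} {Cd R : ℝ} {U V A : Set Y}

lemma isAdmissible_thickenedIndicator {δ : ℝ} (hδ : 0 < δ) (A : Set Y) :
    IsAdmissible A (fun x => (thickenedIndicator hδ A x : ℝ))
      ((thickening δ A).indicator fun _ => ((δ.toNNReal⁻¹ : ℝ≥0) : ℝ≥0∞)) where
  measurable := ((thickenedIndicator hδ A).continuous.measurable).coe_nnreal_real
  nonneg _ := NNReal.coe_nonneg _
  le_one x := NNReal.coe_le_one.2 (thickenedIndicator_le_one hδ A x)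
  one_le x hx := NNReal.one_le_coe.2 (thickenedIndicator_one hδ A hx).ge
  isUpperGradient := by
    refine ⟨measurable_const.indicator isOpen_thickening.measurableSet, fun γ => ?_⟩
    exact ugIneq_indicator_of_lipschitzWith (lipschitzWith_thickenedIndicator hδ A)
      fun x hx => NNReal.coe_eq_zero.2 (thickenedIndicator_zero hδ A hx)

lemma borelCapa1_le_mul_measure_thickening {δ : ℝ} (hδ : 0 < δ) (μ : Measure Y) (A : Set Y) :
    borelCapa1 μ A ≤ (1 + (ENNReal.ofReal δ)⁻¹) * μ (thickening δ A) := by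
  have hmeas : MeasurableSet (thickening δ A) := isOpen_thickening.measurableSet
  have hle (x : Y) : ENNReal.ofReal (thickenedIndicator hδ A x)
      ≤ (thickening δ A).indicator (fun _ => (1 : ℝ≥0∞)) x := by
    by_cases hx : x ∈ thickening δ A
    · simpa [hx] using thickenedIndicator_le_one hδ A x
    · simp [hx, thickenedIndicator_zero hδ A hx]
  refine (isAdmissible_thickenedIndicator hδ A).borelCapa1_le.trans ?_
  rw [add_mul, ← lintegral_indicator_const hmeas, ← lintegral_indicator_const hmeas,
    ENNReal.coe_inv (Real.toNNReal_pos.2 hδ).ne']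
  exact add_le_add (lintegral_mono hle) le_rfl

lemma borelCapa1_ball_le (hμ : Doubling μ Cd) (c : Y) {r : ℝ} (hr : 0 < r) (hrR : r ≤ R) :
    borelCapa1 μ (ball c r) ≤
      ENNReal.ofReal (R + 1) * ENNReal.ofReal Cd * (μ (ball c r) / ENNReal.ofReal r) := by
  have hR : 0 ≤ R := hr.le.trans hrR
  have hcoeff : 1 + (ENNReal.ofReal r)⁻¹ ≤ ENNReal.ofReal (R + 1) * (ENNReal.ofReal r)⁻¹ := by
    rw [ENNReal.ofReal_add hR zero_le_one, ENNReal.ofReal_one, add_mul, one_mul]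
    gcongr
    rw [← div_eq_mul_inv, ENNReal.le_div_iff_mul_le (by simp [hr]) (by simp), one_mul]
    exact ENNReal.ofReal_le_ofReal hrR
  have hthick : thickening r (ball c r) ⊆ ball c (2 * r) := by
    simpa only [two_mul] using thickening_ball c r r
  calc borelCapa1 μ (ball c r)
      ≤ (1 + (ENNReal.ofReal r)⁻¹) * μ (thickening r (ball c r)) :=
        borelCapa1_le_mul_measure_thickening hr μ _
    _ ≤ ENNReal.ofReal (R + 1) * (ENNReal.ofReal r)⁻¹ * (ENNReal.ofReal Cd * μ (ball c r)) := by
        gcongr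
        exact (measure_mono hthick).trans (hμ.2 c r hr).2.1
    _ = _ := by
        rw [div_eq_mul_inv]
        ring

lemma iInf_isOpen_borelCapa1_le_mul_HR (hμ : Doubling μ Cd) (hR : 0 < R) (A : Set Y) :
    ⨅ (B : Set Y) (_ : IsOpen B) (_ : A ⊆ B), borelCapa1 μ B ≤
      ENNReal.ofReal (R + 1) * ENNReal.ofReal Cd * HR μ R A := by
  have hCd : 0 < Cd := zero_lt_one.trans_le hμ.1
  set C : ℝ≥0∞ := ENNReal.ofReal (R + 1) * ENNReal.ofReal Cd
  have hC : C ≠ 0 := by positivity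
  have hC_top : C ≠ ∞ := ENNReal.mul_ne_top ENNReal.ofReal_ne_top ENNReal.ofReal_ne_top
  simp only [HR, ENNReal.mul_iInf_of_ne hC hC_top]
  refine le_iInf₂ fun c r => le_iInf₂ fun hr hcover => ?_
  calc ⨅ (B : Set Y) (_ : IsOpen B) (_ : A ⊆ B), borelCapa1 μ B
      ≤ borelCapa1 μ (⋃ i, ball (c i) (r i)) :=
        iInf₂_le_of_le _ (isOpen_iUnion fun _ => isOpen_ball) (iInf_le _ hcover)
    _ ≤ ∑' i, borelCapa1 μ (ball (c i) (r i)) := borelCapa1_iUnion_le μ _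
    _ ≤ ∑' i, C * (μ (ball (c i) (r i)) / ENNReal.ofReal (r i)) :=
        ENNReal.tsum_le_tsum fun i => borelCapa1_ball_le hμ (c i) (hr i).1 (hr i).2
    _ = C * ∑' i, μ (ball (c i) (r i)) / ENNReal.ofReal (r i) := ENNReal.tsum_mul_left

lemma exists_isOpen_superset_borelCapa1_lt (hμ : Doubling μ Cd) (hA : Hcodim μ A = 0)
    {ε : ℝ≥0∞} (hε : ε ≠ 0) : ∃ B, IsOpen B ∧ A ⊆ B ∧ borelCapa1 μ B < ε := by
  have hHR : HR μ 1 A = 0 := by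
    simp only [Hcodim, ENNReal.iSup_eq_zero] at hA
    exact hA 1 zero_lt_one
  have hlt : ⨅ (B : Set Y) (_ : IsOpen B) (_ : A ⊆ B), borelCapa1 μ B < ε := by
    refine (iInf_isOpen_borelCapa1_le_mul_HR hμ zero_lt_one A).trans_lt ?_
    rw [hHR, mul_zero]
    exact pos_iff_ne_zero.2 hε
  simpa only [iInf_lt_iff, exists_prop] using hlt

lemma QuasiOpen.exists_isOpen_superset_of_Hcodim_eq_zero (hU : QuasiOpen μ U)
    (hμ : Doubling μ Cd) (hA : Hcodim μ A = 0) {ε : ℝ} (hε : 0 < ε) :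
    ∃ G, IsOpen G ∧ capa1 μ G < ENNReal.ofReal ε ∧ IsOpen (U ∪ G) ∧ A ⊆ G := by
  obtain ⟨G, hG, hG_lt, hUG⟩ := hU (ε / 2) (half_pos hε)
  obtain ⟨B, hB, hAB, hB_lt⟩ := exists_isOpen_superset_borelCapa1_lt hμ hA
    (ENNReal.ofReal_pos.2 (half_pos hε)).ne'
  refine ⟨G ∪ B, hG.union hB, ?_, ?_, hAB.trans subset_union_right⟩
  · calc capa1 μ (G ∪ B) ≤ capa1 μ G + borelCapa1 μ B := capa1_union_le μ G B
      _ < ENNReal.ofReal (ε / 2) + ENNReal.ofReal (ε / 2) := ENNReal.add_lt_add hG_lt hB_lt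
      _ = ENNReal.ofReal ε := by
        rw [← ENNReal.ofReal_add (half_pos hε).le (half_pos hε).le, add_halves]
  · rw [← union_assoc]
    exact hUG.union hB

lemma QuasiOpen.of_union_eq_union (hU : QuasiOpen μ U) (hμ : Doubling μ Cd)
    (hA : Hcodim μ A = 0) (hUV : U ∪ A = V ∪ A) : QuasiOpen μ V := by
  intro ε hε
  obtain ⟨G, hG, hG_lt, hUG, hAG⟩ := hU.exists_isOpen_superset_of_Hcodim_eq_zero hμ hA hε
  have hVG : V ∪ G = U ∪ G := by
    rw [← union_eq_self_of_subset_left hAG, ← union_assoc, ← union_assoc, hUV]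
  exact ⟨G, hG, hG_lt, hVG ▸ hUG⟩

theorem quasiopen_diff_union_of_H_null_general (hμ : Doubling μ Cd) (hU : QuasiOpen μ U)
    (hA : Hcodim μ A = 0) : QuasiOpen μ (U \ A) ∧ QuasiOpen μ (U ∪ A) :=
  ⟨hU.of_union_eq_union hμ hA sdiff_union_self.symm,
    hU.of_union_eq_union hμ hA (by rw [union_assoc, union_self])⟩

end HausdorffContent

/-- Stability of `1`-quasiopen sets under `H`-negligible
perturbations: if `U` is `1`-quasiopen and `H(A) = 0` (codimension-one Hausdorff
measure), then `U \ A` and `U ∪ A` are `1`-quasiopen. -/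
theorem quasiopen_diff_union_of_H_null
    (μ : Measure X) (hcomp : CompleteSpace X)
    (hdoub : ∃ Cd : ℝ, Doubling μ Cd) (hpoin : ∃ CP lam : ℝ, Poincare μ CP lam)
    (U A : Set X) (hU : QuasiOpen μ U) (hA : Hcodim μ A = 0) :
    QuasiOpen μ (U \ A) ∧ QuasiOpen μ (U ∪ A) := by
  obtain ⟨_, hμ⟩ := hdoub
  exact quasiopen_diff_union_of_H_null_general hμ hU hA

end PaperBV
end
end
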